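/- Let K be a number field and S a finite set of places of K containing all the archimedean ones. Let Q₁, Q₂, Q₃, Q₄ be four distinct points in ℙ¹(K). Then the set ℱ = { P ∈ ℙ¹(K) : δ_𝔭(P,Q₁) = δ_𝔭(P,Q₂) and δ_𝔭(P,Q₃) = δ_𝔭(P,Q₄) for all primes 𝔭 ∉ S } is finite, with cardinality at most C(3,|S|) + 2, where C(3,s) = e^{18^9(3s−2)}. -/

import Mathlib

open NumberField IsDedekindDomain MvPolynomial
open scoped Classical nonZeroDivisors

set_option synthInstance.maxHeartbeats 1000000
set_option maxHeartbeats 1000000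

noncomputable section

/-- The projective line over `K`. -/
abbrev P1 (K : Type*) [Field K] := Projectivization K (Fin 2 → K)

variable {K : Type*} [Field K] [NumberField K]

/-- The additive `v`-adic valuation (order) of `x ∈ K`, with junk value `0` at `x = 0`,
normalized so that it is surjective onto `ℤ`. -/
def ordAt (v : HeightOneSpectrum (𝓞 K)) (x : K) : ℤ :=
  if hx : x = 0 then 0
  else - Multiplicative.toAdd (WithZero.unzero ((v.valuation K).ne_zero_iff.mpr hx))

/-- `min (v(x), v(y))` for a pair of coordinates, not both zero. -/
def minOrd (v : HeightOneSpectrum (𝓞 K)) (x y : K) : ℤ :=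
  if x = 0 then ordAt v y else if y = 0 then ordAt v x else min (ordAt v x) (ordAt v y)

/-- The `v`-adic logarithmic distance between two points of `ℙ¹(K)`:
`δ_v(P,Q) = v(x₁y₂ - x₂y₁) - min(v x₁, v y₁) - min(v x₂, v y₂)`, with value `⊤` when `P = Q`
(it is independent of the choice of homogeneous coordinates, so we compute it on the chosen
representatives). -/
def logDist (v : HeightOneSpectrum (𝓞 K)) (P Q : P1 K) : WithTop ℤ :=
  if P = Q then ⊤
  else ((ordAt v (P.rep 0 * Q.rep 1 - P.rep 1 * Q.rep 0)
        - minOrd v (P.rep 0) (P.rep 1) - minOrd v (Q.rep 0) (Q.rep 1) : ℤ) : WithTop ℤ)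

/-- An endomorphism of `ℙ¹` of degree `d` defined over `K`, given by a pair of homogeneous
forms of degree `d` with no common zero over the algebraic closure, together with the induced
self-map of `ℙ¹(K)`. -/
structure P1Map (K : Type*) [Field K] (d : ℕ) where
  toFun : P1 K → P1 K
  F : MvPolynomial (Fin 2) K
  G : MvPolynomial (Fin 2) K
  homF : F.IsHomogeneous d
  homG : G.IsHomogeneous d
  coprime : ∀ x y : AlgebraicClosure K,
    aeval ![x, y] F = 0 → aeval ![x, y] G = 0 → x = 0 ∧ y = 0
  compat : ∀ (x y : K) (hxy : ![x, y] ≠ 0)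
    (h : ![eval ![x, y] F, eval ![x, y] G] ≠ 0),
    toFun (Projectivization.mk K ![x, y] hxy) =
      Projectivization.mk K ![eval ![x, y] F, eval ![x, y] G] h

variable {d : ℕ}

/-- `φ` has good reduction at the finite place `v`: some representing pair of forms has
coefficients in the valuation ring at `v`, not all in the maximal ideal, and the reductions
of the two forms modulo `v` have no common zero in `ℙ¹` of the algebraic closure of the
residue field. -/
def GoodReductionAt (φ : P1Map K d) (v : HeightOneSpectrum (𝓞 K)) : Prop :=
  ∃ c : K, c ≠ 0 ∧
    ∃ F₀ G₀ : MvPolynomial (Fin 2) (v.valuation (K := K)).valuationSubring,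
      MvPolynomial.map ((v.valuation (K := K)).valuationSubring.subtype) F₀ = C c * φ.F ∧
      MvPolynomial.map ((v.valuation (K := K)).valuationSubring.subtype) G₀ = C c * φ.G ∧
      ((∃ m, F₀.coeff m ∉ IsLocalRing.maximalIdeal (v.valuation (K := K)).valuationSubring) ∨
        (∃ m, G₀.coeff m ∉ IsLocalRing.maximalIdeal (v.valuation (K := K)).valuationSubring)) ∧
      ∀ x y : AlgebraicClosure
          (IsLocalRing.ResidueField (v.valuation (K := K)).valuationSubring),
        eval ![x, y] (MvPolynomial.map
          ((algebraMap (IsLocalRing.ResidueField (v.valuation (K := K)).valuationSubring)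
              (AlgebraicClosure _)).comp
            (IsLocalRing.residue _)) F₀) = 0 →
        eval ![x, y] (MvPolynomial.map
          ((algebraMap (IsLocalRing.ResidueField (v.valuation (K := K)).valuationSubring)
              (AlgebraicClosure _)).comp
            (IsLocalRing.residue _)) G₀) = 0 →
        x = 0 ∧ y = 0

/-- `φ` has good reduction outside `S`, where `S` consists of all archimedean places together
with the finite places in `T`. -/
def GoodReductionOutside (φ : P1Map K d) (T : Finset (HeightOneSpectrum (𝓞 K))) : Prop :=
  ∀ v ∉ T, GoodReductionAt φ v

/-- `P` is a periodic point of `φ`. -/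
def IsPeriodicPoint (φ : P1Map K d) (P : P1 K) : Prop :=
  ∃ n, 0 < n ∧ φ.toFun^[n] P = P

/-- `P` is a preperiodic point of `φ`. -/
def IsPreperiodicPoint (φ : P1Map K d) (P : P1 K) : Prop :=
  ∃ m, IsPeriodicPoint φ (φ.toFun^[m] P)

/-- `P` is a tail point of `φ`: preperiodic but not periodic. -/
def IsTailPoint (φ : P1Map K d) (P : P1 K) : Prop :=
  IsPreperiodicPoint φ P ∧ ¬ IsPeriodicPoint φ P

/-- The set `Tail(φ,K,P)` of `K`-rational tail points of `P`: non-periodic points having `P`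
in their forward orbit. -/
def TailOf (φ : P1Map K d) (P : P1 K) : Set (P1 K) :=
  {Q | ¬ IsPeriodicPoint φ Q ∧ ∃ n, φ.toFun^[n] Q = P}

/-- `P = [a:b]` is a critical point of `φ = [F:G]`: the algebraic condition
`φ([x:y]) = φ([a:b])`, i.e. the form `G(a,b)·F(X,Y) - F(a,b)·G(X,Y)`, vanishes to order
at least `2` at `[a:b]`. -/
def IsCriticalPt (φ : P1Map K d) (P : P1 K) : Prop :=
  ∃ (a b : K) (hab : ![a, b] ≠ 0), P = Projectivization.mk K ![a, b] hab ∧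
    (C b * X 0 - C a * X 1) ^ 2 ∣
      (C (eval ![a, b] φ.G) * φ.F - C (eval ![a, b] φ.F) * φ.G)

/-- `P` belongs to a critical cycle of `φ`: it lies in the orbit of a critical periodic
point. -/
def InCriticalCycle (φ : P1Map K d) (P : P1 K) : Prop :=
  ∃ Q, IsCriticalPt φ Q ∧ IsPeriodicPoint φ Q ∧ ∃ n, φ.toFun^[n] Q = P

/-- The cardinality `|S|` of the set of places `S` consisting of all archimedean places
together with the finite places in `T`. -/
def sCard (K : Type*) [Field K] [NumberField K] (T : Finset (HeightOneSpectrum (𝓞 K))) : ℕ :=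
  T.card + Fintype.card (InfinitePlace K)

/-- `B(s) = 2^{16 s}`. -/
def Bconst (s : ℕ) : ℕ := 2 ^ (16 * s)

/-- `C(n,s) = e^{(6n)^{3n} (n s + 1 - n)}`. -/
def Cconst (n s : ℕ) : ℝ := Real.exp ((6 * n : ℝ) ^ (3 * n) * (n * s + 1 - n))

/-- `CV(d,s) = (3B(s)+13)d + 27B(s) + C(5,s) + 6C(3,s) + 32`. -/
def CVconst (d s : ℕ) : ℝ :=
  (3 * (Bconst s : ℝ) + 13) * d + 27 * (Bconst s : ℝ) + Cconst 5 s + 6 * Cconst 3 s + 32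

/-- `L₁(d,s) = (d-1)(1 + d(1 + B(s)))`. -/
def L1const (d s : ℕ) : ℕ := (d - 1) * (1 + d * (1 + Bconst s))

/-- `L₂(d,s) = max{(2(C(3,s)+2)+1)d + 1, (d-1)(1 + B(s)(B(s) + C(3,s) + 3))}`. -/
def L2const (d s : ℕ) : ℝ :=
  max ((2 * (Cconst 3 s + 2) + 1) * d + 1)
    (((d : ℝ) - 1) * (1 + (Bconst s : ℝ) * ((Bconst s : ℝ) + Cconst 3 s + 3)))

/-- `L₃(d,s) = ((1 + 3B(s))B(s) + 1)(d-1)`. -/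
def L3const (d s : ℕ) : ℕ := ((1 + 3 * Bconst s) * Bconst s + 1) * (d - 1)

/-- `L₄(d,s) = (C(3,s) + 3)(d-1)`. -/
def L4const (d s : ℕ) : ℝ := (Cconst 3 s + 3) * ((d : ℝ) - 1)

end


namespace FPL
open Height Height.AdmissibleAbsValues

/-- Master height inequality deduced from the product formula. -/
theorem master {K : Type*} [Field K] [AdmissibleAbsValues K] {ι : Type*} [Fintype ι]
    (x A : K) (hA : A ≠ 0) (C : ℝ) (hC : 0 < C) (a : ι → K) (e : ι → ℕ)
    (harch : ∀ v ∈ archAbsVal (K := K), max (v x) 1 * v A ≤ C * ∏ i, max (v (a i)) 1 ^ e i)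
    (hnon : ∀ v ∈ nonarchAbsVal (K := K), max (v x) 1 * v A ≤ ∏ i, max (v (a i)) 1 ^ e i) :
    logHeight₁ x ≤ totalWeight K * Real.log C + ∑ i, e i * logHeight₁ (a i) := by
  have key : mulHeight₁ x ≤ C ^ totalWeight K * ∏ i, mulHeight₁ (a i) ^ e i := by
    have h1 : mulHeight₁ x = ((archAbsVal.map fun v : AbsoluteValue K ℝ ↦ max (v x) 1).prod *
        (archAbsVal.map fun v : AbsoluteValue K ℝ ↦ v A).prod) *
        ((∏ᶠ v : nonarchAbsVal (K := K), max (v.val x) 1) * ∏ᶠ v : nonarchAbsVal (K := K), v.val A) := by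
      have := product_formula hA
      rw [Height.mulHeight₁_eq]
      linear_combination (-((archAbsVal.map fun v : AbsoluteValue K ℝ ↦ max (v x) 1).prod *
        (∏ᶠ v : nonarchAbsVal (K := K), max (v.val x) 1))) * this
    rw [h1, ← Multiset.prod_map_mul, ← finprod_mul_distrib (by fun_prop) (by fun_prop (disch := assumption))]
    have h2 : C ^ totalWeight K * ∏ i, mulHeight₁ (a i) ^ e i =
        (archAbsVal.map fun v : AbsoluteValue K ℝ ↦ C * ∏ i, max (v (a i)) 1 ^ e i).prod *
        (∏ᶠ v : nonarchAbsVal (K := K), ∏ i, max (v.val (a i)) 1 ^ e i) := by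
      rw [Multiset.prod_map_mul, finprod_prod_comm _ _ (by fun_prop), Multiset.prod_map_prod]
      simp only [Multiset.map_const', Multiset.prod_replicate, Height.mulHeight₁_eq, mul_pow,
        Finset.prod_mul_distrib, Multiset.prod_map_pow]
      rw [mul_assoc]
      refine congrArg _ (congrArg _ ?_)
      refine Finset.prod_congr rfl fun i _ => ?_
      exact finprod_pow (f := fun v : nonarchAbsVal (K := K) => max (v.val (a i)) 1) (by fun_prop) (e i)
    rw [h2]
    gcongr
    · exact finprod_nonneg fun v ↦ mul_nonneg (by positivity) (v.val.nonneg _)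
    · exact Multiset.prod_map_nonneg fun v h ↦ by positivity
    · exact Multiset.prod_map_le_prod_map₀ _ _
        (fun v _ ↦ mul_nonneg (by positivity) (v.nonneg _)) fun v hv ↦ harch v hv
    · exact finprod_le_finprod (by fun_prop (disch := assumption))
        (fun v ↦ mul_nonneg (by positivity) (v.val.nonneg _)) (by fun_prop) fun v ↦ hnon v.1 v.2
  have h3 := Real.log_le_log (by positivity) key
  rw [Real.log_mul (by positivity) (by positivity), Real.log_pow, Real.log_prod (fun i _ => by positivity)] at h3
  simpa [logHeight₁_eq_log_mulHeight₁, Real.log_pow] using h3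

theorem logHeight₁_div_le {K : Type*} [Field K] [AdmissibleAbsValues K] (x y : K) :
    logHeight₁ (x / y) ≤ logHeight₁ x + logHeight₁ y := by
  rw [div_eq_mul_inv]
  exact (logHeight₁_mul_le _ _).trans (by rw [logHeight₁_inv])

end FPL

namespace FPL
section bridge
open Height
variable {K : Type*} [Field K] [NumberField K]

/-- contribution of the places outside `S` -/
noncomputable def offT (T : Finset (HeightOneSpectrum (𝓞 K))) (z : K) : ℝ :=
  ∑ᶠ v : FinitePlace K, if v.maximalIdeal ∈ T then 0 else |Real.log (v z)|

/-- logarithms at the places of `S` -/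
noncomputable def Lg (T : Finset (HeightOneSpectrum (𝓞 K))) (z : K) : InfinitePlace K ⊕ T → ℝ :=
  Sum.elim (fun v => v.mult * Real.log (v z)) (fun p => Real.log (FinitePlace.mk p.1 z))

theorem posLog_add_inv (a : ℝ) : Real.posLog a + Real.posLog a⁻¹ = |Real.log a| := by
  rw [← Real.half_mul_log_add_log_abs, ← Real.half_mul_log_add_log_abs, Real.log_inv, abs_neg]; ring

theorem fs_ne {z : K} (hz : z ≠ 0) : {v : FinitePlace K | v z ≠ 1}.Finite := by
  have := FinitePlace.hasFiniteMulSupport hz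
  exact this

theorem fs_log {z : K} (hz : z ≠ 0) (f : FinitePlace K → ℝ) (hf : ∀ v, v z = 1 → f v = 0) :
    (Function.support f).Finite :=
  (fs_ne hz).subset fun v hv h => hv (hf v h)

theorem offT_nonneg (T : Finset (HeightOneSpectrum (𝓞 K))) (z : K) : 0 ≤ offT T z :=
  finsum_nonneg fun v => by split_ifs <;> positivity

theorem two_height (T : Finset (HeightOneSpectrum (𝓞 K))) {z : K} (hz : z ≠ 0) :
    2 * logHeight₁ z = ∑ i, |Lg T z i| + offT T z := by
  have h1 : 2 * logHeight₁ z = logHeight₁ z + logHeight₁ z⁻¹ := by rw [logHeight₁_inv]; ring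
  rw [h1, NumberField.logHeight₁_eq, NumberField.logHeight₁_eq]
  have h2 : ∀ a b c d : ℝ, a + b + (c + d) = (a + c) + (b + d) := fun a b c d => by ring
  rw [h2, ← Finset.sum_add_distrib, ← finsum_add_distrib
    (fs_log hz _ (fun v hv => by simp [hv])) (fs_log hz _ (fun v hv => by simp [map_inv₀, hv]))]
  rw [Fintype.sum_sum_type, add_assoc]
  congr 1
  · refine Finset.sum_congr rfl fun v _ => ?_
    rw [← mul_add, map_inv₀, posLog_add_inv, Lg, Sum.elim_inl, abs_mul, Nat.abs_cast]
  · simp_rw [map_inv₀, posLog_add_inv]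
    have h3 : ∀ v : FinitePlace K, |Real.log (v z)| = (if v.maximalIdeal ∈ T then |Real.log (v z)| else 0)
      + (if v.maximalIdeal ∈ T then 0 else |Real.log (v z)|) := fun v => by split_ifs <;> simp
    rw [finsum_congr h3, finsum_add_distrib (fs_log hz _ (fun v hv => by simp [hv]))
      (fs_log hz _ (fun v hv => by simp [hv]))]
    rw [offT]
    congr 1
    rw [finsum_eq_sum_of_support_subset (s := T.image FinitePlace.mk), Finset.sum_image, ← Finset.sum_coe_sort T]
    · refine Finset.sum_congr rfl fun p _ => ?_
      rw [FinitePlace.maximalIdeal_mk, if_pos p.2]; rfl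
    · intro a _ b _ h; exact FinitePlace.mk_eq_iff.mp h
    · intro v hv
      rw [Function.mem_support] at hv
      have : v.maximalIdeal ∈ T := by
        by_contra h; simp [h] at hv
      rw [Finset.coe_image]
      exact ⟨_, this, FinitePlace.mk_maximalIdeal v⟩

/-- the logarithmic vector of a pair -/
noncomputable def ell (T : Finset (HeightOneSpectrum (𝓞 K))) (x y : K) :
    PiLp 1 (fun _ : ((InfinitePlace K ⊕ T) ⊕ (InfinitePlace K ⊕ T)) ⊕ Unit => ℝ) :=
  WithLp.toLp 1 (Sum.elim (Sum.elim (Lg T x) (Lg T y)) (fun _ => offT T x + offT T y))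

theorem ell_norm (T : Finset (HeightOneSpectrum (𝓞 K))) {x y : K} (hx : x ≠ 0) (hy : y ≠ 0) :
    ‖ell T x y‖ = 2 * logHeight₁ x + 2 * logHeight₁ y := by
  rw [PiLp.norm_eq_of_L1, Fintype.sum_sum_type, Fintype.sum_sum_type, two_height T hx, two_height T hy]
  simp only [ell, Sum.elim_inl, Sum.elim_inr, Real.norm_eq_abs]
  simp only [Finset.univ_unique, Finset.sum_singleton]
  rw [abs_of_nonneg (add_nonneg (offT_nonneg T x) (offT_nonneg T y))]
  ring

theorem Lg_div (T : Finset (HeightOneSpectrum (𝓞 K))) {x1 x2 : K} (h1 : x1 ≠ 0) (h2 : x2 ≠ 0) (n : ℕ) (i) :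
    Lg T (x2 / x1^n) i = Lg T x2 i - n * Lg T x1 i := by
  rcases i with v | p
  · simp only [Lg, Sum.elim_inl]
    rw [map_div₀, map_pow, Real.log_div (by simpa using h2) (by simp [h1]), Real.log_pow]; ring
  · simp only [Lg, Sum.elim_inr]
    rw [map_div₀, map_pow, Real.log_div (by simpa using h2) (by simp [h1]), Real.log_pow]

theorem offT_div (T : Finset (HeightOneSpectrum (𝓞 K))) {x1 x2 : K} (h1 : x1 ≠ 0) (h2 : x2 ≠ 0) (n : ℕ) (hn : 1 ≤ n)
    (h : ∀ v : FinitePlace K, v.maximalIdeal ∉ T → v x1 = v x2) :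
    offT T x1 = offT T x2 ∧ offT T (x2 / x1^n) = |offT T x2 - n * offT T x1| := by
  have e1 : offT T x1 = offT T x2 := finsum_congr fun v => by
    split_ifs with hv
    · rfl
    · rw [h v hv]
  refine ⟨e1, ?_⟩
  have hn' : (1:ℝ) ≤ n := by exact_mod_cast hn
  have e2 : offT T (x2 / x1^n) = (n - 1) * offT T x2 := by
    rw [offT, offT, ← smul_eq_mul, smul_finsum]
    refine finsum_congr fun v => ?_
    split_ifs with hv
    · simp
    · rw [smul_eq_mul, map_div₀, map_pow, h v hv, Real.log_div (by simpa using h2) (by simp [h2]), Real.log_pow]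
      rw [show Real.log (v x2) - n * Real.log (v x2) = -((n-1) * Real.log (v x2)) by ring, abs_neg, abs_mul,
        abs_of_nonneg (by linarith)]
  rw [e2, e1, show offT T x2 - n * offT T x2 = -((n-1) * offT T x2) by ring, abs_neg,
    abs_of_nonneg (mul_nonneg (by linarith) (offT_nonneg T x2))]

theorem ell_sub (T : Finset (HeightOneSpectrum (𝓞 K))) {x1 y1 x2 y2 : K} (hx1 : x1 ≠ 0) (hy1 : y1 ≠ 0)
    (hx2 : x2 ≠ 0) (hy2 : y2 ≠ 0) (n : ℕ) (hn : 1 ≤ n)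
    (h : ∀ v : FinitePlace K, v.maximalIdeal ∉ T → v x1 = v x2)
    (h' : ∀ v : FinitePlace K, v.maximalIdeal ∉ T → v y1 = v y2) :
    ‖ell T x2 y2 - (n : ℝ) • ell T x1 y1‖ = 2 * logHeight₁ (x2 / x1^n) + 2 * logHeight₁ (y2 / y1^n) := by
  have hn' : (1:ℝ) ≤ n := by exact_mod_cast hn
  obtain ⟨a1, a2⟩ := offT_div T hx1 hx2 n hn h
  obtain ⟨b1, b2⟩ := offT_div T hy1 hy2 n hn h'
  rw [PiLp.norm_eq_of_L1, Fintype.sum_sum_type, Fintype.sum_sum_type,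
    two_height T (div_ne_zero hx2 (pow_ne_zero n hx1)), two_height T (div_ne_zero hy2 (pow_ne_zero n hy1)), a2, b2]
  simp only [Lg_div T hx1 hx2, Lg_div T hy1 hy2]
  simp only [ell, PiLp.sub_apply, PiLp.smul_apply, smul_eq_mul, Sum.elim_inl, Sum.elim_inr, Real.norm_eq_abs]
  simp only [Finset.univ_unique, Finset.sum_singleton]
  rw [a1, b1]
  have c1 := offT_nonneg T x2
  have c2 := offT_nonneg T y2
  have e : ∀ w : ℝ, 0 ≤ w → |w - n * w| = (n - 1) * w := fun w hw => by
    rw [show w - n * w = -((n-1)*w) by ring, abs_neg, abs_of_nonneg (mul_nonneg (by linarith) hw)]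
  rw [e _ c1, e _ c2, e _ (add_nonneg c1 c2)]
  ring

theorem ell_finrank (T : Finset (HeightOneSpectrum (𝓞 K))) :
    Module.finrank ℝ (PiLp 1 (fun _ : ((InfinitePlace K ⊕ T) ⊕ (InfinitePlace K ⊕ T)) ⊕ Unit => ℝ)) =
      2 * sCard K T + 1 := by
  rw [(WithLp.linearEquiv 1 ℝ _).finrank_eq, Module.finrank_fintype_fun_eq_card]
  simp [sCard]; ring

end bridge
end FPL


namespace FPL
open MeasureTheory Metric Module

open scoped Function ENNReal in
theorem card_sep {E : Type*} [NormedAddCommGroup E] [NormedSpace ℝ E] [FiniteDimensional ℝ E]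
    (s : Finset E) (R d : ℝ) (hR : 0 ≤ R) (hd : 0 < d) (hs : ∀ c ∈ s, ‖c‖ ≤ R)
    (h : ∀ c ∈ s, ∀ c' ∈ s, c ≠ c' → d ≤ ‖c - c'‖) :
    (s.card : ℝ) ≤ (1 + 2 * R / d) ^ finrank ℝ E := by
  borelize E
  let μ : Measure E := Measure.addHaar
  let δ : ℝ := d / 2
  let ρ : ℝ := R + d / 2
  have ρpos : 0 < ρ := by positivity
  have δpos : 0 < δ := by positivity
  set A := ⋃ c ∈ s, ball (c : E) δ with hA
  have D : Set.Pairwise (s : Set E) (Disjoint on fun c => ball (c : E) δ) := by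
    rintro c hc d hd hcd
    apply ball_disjoint_ball
    rw [dist_eq_norm]
    have := h c hc d hd hcd
    simp only [δ]; linarith
  have A_subset : A ⊆ ball (0 : E) ρ := by
    refine Set.iUnion₂_subset fun x hx => ?_
    apply ball_subset_ball'
    rw [dist_zero_right]
    have := hs x hx
    simp only [δ, ρ]; linarith
  have I :
    (s.card : ℝ≥0∞) * ENNReal.ofReal (δ ^ finrank ℝ E) * μ (ball 0 1) ≤
      ENNReal.ofReal (ρ ^ finrank ℝ E) * μ (ball 0 1) :=
    calc
      (s.card : ℝ≥0∞) * ENNReal.ofReal (δ ^ finrank ℝ E) * μ (ball 0 1) = μ A := by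
        rw [hA, measure_biUnion_finset D fun c _ => measurableSet_ball]
        simp only [μ.addHaar_ball_of_pos _ δpos]
        simp only [Finset.sum_const, nsmul_eq_mul, mul_assoc]
      _ ≤ μ (ball (0 : E) ρ) := measure_mono A_subset
      _ = ENNReal.ofReal (ρ ^ finrank ℝ E) * μ (ball 0 1) := by
        simp only [μ.addHaar_ball_of_pos _ ρpos]
  have J : (s.card : ℝ≥0∞) * ENNReal.ofReal (δ ^ finrank ℝ E) ≤ ENNReal.ofReal (ρ ^ finrank ℝ E) :=
    (ENNReal.mul_le_mul_iff_left (measure_ball_pos _ _ zero_lt_one).ne' measure_ball_lt_top.ne).1 I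
  have K := ENNReal.toReal_le_of_le_ofReal (pow_nonneg ρpos.le _) J
  rw [ENNReal.toReal_mul, ENNReal.toReal_natCast, ENNReal.toReal_ofReal (by positivity)] at K
  have h2 : (1 + 2 * R / d) = ρ / δ := by simp only [ρ, δ]; field_simp; ring
  rw [h2, div_pow, le_div_iff₀ (by positivity)]
  exact K

theorem pack {α E : Type*} [NormedAddCommGroup E] [NormedSpace ℝ E] [FiniteDimensional ℝ E]
    (Z : Finset α) (f : α → E) (R d : ℝ) (hR : 0 ≤ R) (hd : 0 < d) (hf : ∀ z ∈ Z, ‖f z‖ ≤ R)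
    (m : ℕ) (hm : ∀ c ∈ Z, (Z.filter fun z => ‖f z - f c‖ < d).card ≤ m) :
    (Z.card : ℝ) ≤ m * (1 + 2 * R / d) ^ finrank ℝ E := by
  obtain ⟨Sep, hSep⟩ : ∃ Sep : Finset α → Prop, ∀ S, Sep S ↔
    ∀ c ∈ S, ∀ c' ∈ S, c ≠ c' → d ≤ ‖f c - f c'‖ := ⟨_, fun _ => Iff.rfl⟩
  obtain ⟨S, hS, hmax⟩ := Finset.exists_max_image
    (Z.powerset.filter Sep) Finset.card
    ⟨∅, by simp [hSep]⟩
  rw [Finset.mem_filter, Finset.mem_powerset, hSep] at hS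
  obtain ⟨hSZ, hsep⟩ := hS
  have hcov : Z ⊆ S.biUnion fun c => Z.filter fun z => ‖f z - f c‖ < d := by
    intro z hz
    by_contra hcon
    simp only [Finset.mem_biUnion, Finset.mem_filter, not_exists, not_and, not_lt] at hcon
    have hzS : z ∉ S := by
      intro h
      have := hcon z h hz
      simp at this
      linarith
    have := hmax (insert z S) (by
      rw [Finset.mem_filter, Finset.mem_powerset, hSep]
      refine ⟨Finset.insert_subset hz hSZ, ?_⟩
      intro c hc c' hc' hne
      rw [Finset.mem_insert] at hc hc'
      rcases hc with rfl | hc <;> rcases hc' with rfl | hc'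
      · exact absurd rfl hne
      · exact hcon c' hc' hz
      · rw [norm_sub_rev]; exact hcon c hc hz
      · exact hsep c hc c' hc' hne)
    rw [Finset.card_insert_of_notMem hzS] at this
    omega
  have h1 : Z.card ≤ S.card * m :=
    (Finset.card_le_card hcov).trans (Finset.card_biUnion_le_card_mul _ _ _ fun c hc => hm c (hSZ hc))
  have hinj : Set.InjOn f S := by
    intro c hc c' hc' he
    by_contra hne
    have := hsep c hc c' hc' hne
    rw [he] at this
    simp at this
    linarith
  have h2 := card_sep (S.image f) R d hR hd
    (by intro c hc; rw [Finset.mem_image] at hc; obtain ⟨z, hz, rfl⟩ := hc; exact hf z (hSZ hz))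
    (by
      intro c hc c' hc' hne
      rw [Finset.mem_image] at hc hc'
      obtain ⟨z, hz, rfl⟩ := hc
      obtain ⟨z', hz', rfl⟩ := hc'
      exact hsep z hz z' hz' (fun h => hne (by rw [h])))
  rw [Finset.card_image_of_injOn hinj] at h2
  calc (Z.card : ℝ) ≤ S.card * m := by exact_mod_cast h1
    _ ≤ (1 + 2 * R / d) ^ finrank ℝ E * m := by gcongr
    _ = _ := by ring

end FPL

namespace Polynomial.FPL
section wr
variable {K : Type*} [Field K] [CharZero K]

/-- three-term Wronskian -/
noncomputable def W3 (a b c : K[X]) : K[X] :=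
  a * (derivative b * derivative (derivative c) - derivative (derivative b) * derivative c)
  - derivative a * (b * derivative (derivative c) - derivative (derivative b) * c)
  + derivative (derivative a) * (b * derivative c - derivative b * c)

theorem wr2_deg {a b : K[X]} (ha : a ≠ 0) (hb : b ≠ 0)
    (h : a * derivative b = derivative a * b) : a.natDegree = b.natDegree := by
  have key : ∀ f g : K[X], f ≠ 0 → g ≠ 0 → (f * derivative g).coeff (f.natDegree + g.natDegree - 1) =
      f.leadingCoeff * g.leadingCoeff * g.natDegree := by
    intro f g hf hg
    rcases Nat.eq_zero_or_pos g.natDegree with h0 | h0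
    · rw [Polynomial.derivative_of_natDegree_zero h0, h0]; simp
    · have e : f.natDegree + g.natDegree - 1 = f.natDegree + (g.natDegree - 1) := by omega
      rw [e, coeff_mul_add_eq_of_natDegree_le le_rfl (natDegree_derivative_le g), coeff_derivative]
      have : g.natDegree - 1 + 1 = g.natDegree := by omega
      rw [this]
      have h2 : ((g.natDegree - 1 : ℕ) : K) + 1 = g.natDegree := by
        rw [← this]; push_cast; simp
      rw [h2, coeff_natDegree, coeff_natDegree]; ring
  have h1 := key a b ha hb
  have h2 := key b a hb ha
  rw [h, mul_comm, add_comm, h2] at h1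
  have hl : a.leadingCoeff * b.leadingCoeff ≠ 0 := mul_ne_zero (by simpa) (by simpa)
  have : ((a.natDegree : K)) = b.natDegree := by
    apply mul_left_cancel₀ hl
    linear_combination h1
  exact_mod_cast this

theorem wr2 {a b : K[X]} (ha : a ≠ 0) (h : a * derivative b = derivative a * b) :
    ∃ μ : K, b = C μ * a := by
  by_cases hb : b = 0
  · exact ⟨0, by simp [hb]⟩
  have hd := wr2_deg ha hb h
  refine ⟨b.leadingCoeff / a.leadingCoeff, ?_⟩
  have hla : a.leadingCoeff ≠ 0 := by simpa
  set μ := b.leadingCoeff / a.leadingCoeff with hμ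
  by_contra hne
  have hr : b - C μ * a ≠ 0 := sub_ne_zero.mpr hne
  have h2 : a * derivative (b - C μ * a) = derivative a * (b - C μ * a) := by
    simp only [derivative_sub, derivative_C_mul]
    linear_combination h
  have hd2 := wr2_deg ha hr h2
  have hc : (b - C μ * a).coeff a.natDegree = 0 := by
    rw [coeff_sub, coeff_C_mul, coeff_natDegree, hd, coeff_natDegree, hμ]
    field_simp; ring
  rw [hd2, coeff_natDegree] at hc
  exact hr (leadingCoeff_eq_zero.mp hc)

theorem wr3 {a b c : K[X]} (h : W3 a b c = 0) :
    ∃ α β γ : K, (α ≠ 0 ∨ β ≠ 0 ∨ γ ≠ 0) ∧ C α * a + C β * b + C γ * c = 0 := by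
  set w1 := b * derivative c - derivative b * c with hw1
  set w2 := c * derivative a - derivative c * a with hw2
  set w3 := a * derivative b - derivative a * b with hw3
  have d1 : derivative w1 = b * derivative (derivative c) - derivative (derivative b) * c := by
    rw [hw1]; simp only [derivative_sub, derivative_mul]; ring
  have d2 : derivative w2 = c * derivative (derivative a) - derivative (derivative c) * a := by
    rw [hw2]; simp only [derivative_sub, derivative_mul]; ring
  have d3 : derivative w3 = a * derivative (derivative b) - derivative (derivative a) * b := by
    rw [hw3]; simp only [derivative_sub, derivative_mul]; ring
  have e12 : w1 * derivative w2 = derivative w1 * w2 := by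
    rw [d1, d2, hw1, hw2]; unfold W3 at h; linear_combination (c) * h
  have e31 : w3 * derivative w1 = derivative w3 * w1 := by
    rw [d1, d3, hw1, hw3]; unfold W3 at h; linear_combination (b) * h
  have e32 : w3 * derivative w2 = derivative w3 * w2 := by
    rw [d2, d3, hw2, hw3]; unfold W3 at h; linear_combination (-a) * h
  have rel : w1 * a + w2 * b + w3 * c = 0 := by rw [hw1, hw2, hw3]; ring
  by_cases h3 : w3 = 0
  · by_cases ha : a = 0
    · exact ⟨1, 0, 0, by simp, by simp [ha]⟩
    obtain ⟨μ, hμ⟩ := wr2 ha (sub_eq_zero.mp (hw3.symm.trans h3))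
    exact ⟨-μ, 1, 0, by simp, by rw [hμ]; simp⟩
  · obtain ⟨μ, hμ⟩ := wr2 h3 e31
    obtain ⟨ν, hν⟩ := wr2 h3 e32
    refine ⟨μ, ν, 1, by simp, ?_⟩
    apply mul_left_cancel₀ h3
    rw [hμ, hν] at rel
    simp only [map_one]
    linear_combination rel

theorem W3_dvd (r a b c : K[X]) (n : ℕ) (hb : r ^ n ∣ b) (hc : r ^ n ∣ c) :
    r ^ (2 * (n - 2)) ∣ W3 a b c := by
  have aux : ∀ f : K[X], r ^ n ∣ f → r ^ (n - 2) ∣ f ∧ r ^ (n-2) ∣ derivative f ∧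
      r ^ (n - 2) ∣ derivative (derivative f) := by
    intro f hf
    have h1 := pow_sub_one_dvd_derivative_of_pow_dvd hf
    have h2 := pow_sub_one_dvd_derivative_of_pow_dvd h1
    exact ⟨(pow_dvd_pow _ (by omega)).trans hf, (pow_dvd_pow _ (by omega)).trans h1, by
      simpa [Nat.sub_sub] using h2⟩
  obtain ⟨b0, b1, b2⟩ := aux b hb
  obtain ⟨c0, c1, c2⟩ := aux c hc
  rw [two_mul, pow_add]
  unfold W3
  refine dvd_add (dvd_sub ?_ ?_) ?_
  all_goals refine Dvd.dvd.mul_left ?_ _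
  all_goals refine dvd_sub (mul_dvd_mul ?_ ?_) (mul_dvd_mul ?_ ?_) <;> assumption

theorem W3_dvd' (r a b c : K[X]) (n : ℕ) (hb : r ^ n ∣ b) :
    r ^ (n - 2) ∣ W3 a b c := by
  have h1 := pow_sub_one_dvd_derivative_of_pow_dvd hb
  have h2 := pow_sub_one_dvd_derivative_of_pow_dvd h1
  have b0 : r ^ (n-2) ∣ b := (pow_dvd_pow _ (by omega)).trans hb
  have b1 : r ^ (n-2) ∣ derivative b := (pow_dvd_pow _ (by omega)).trans h1
  have b2 : r ^ (n-2) ∣ derivative (derivative b) := by simpa [Nat.sub_sub] using h2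
  unfold W3
  refine dvd_add (dvd_sub ?_ ?_) ?_
  all_goals refine Dvd.dvd.mul_left ?_ _
  all_goals refine dvd_sub (Dvd.dvd.mul_right ?_ _) (Dvd.dvd.mul_right ?_ _) <;> assumption

theorem W3_deg (a b c : K[X]) (A B D : ℕ) (ha : a.natDegree ≤ A) (hb : b.natDegree ≤ B)
    (hc : c.natDegree ≤ D) : (W3 a b c).natDegree ≤ A + B + D := by
  have d : ∀ (f : K[X]) (N : ℕ), f.natDegree ≤ N → (derivative f).natDegree ≤ N := fun f N h =>
    (natDegree_derivative_le f).trans (by omega)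
  have m : ∀ (f g : K[X]) (M N : ℕ), f.natDegree ≤ M → g.natDegree ≤ N → (f*g).natDegree ≤ M + N :=
    fun f g M N h1 h2 => natDegree_mul_le.trans (by omega)
  have s : ∀ (f g : K[X]) (M : ℕ), f.natDegree ≤ M → g.natDegree ≤ M → (f-g).natDegree ≤ M :=
    fun f g M h1 h2 => (natDegree_sub_le f g).trans (by omega)
  have s' : ∀ (f g : K[X]) (M : ℕ), f.natDegree ≤ M → g.natDegree ≤ M → (f+g).natDegree ≤ M :=
    fun f g M h1 h2 => (natDegree_add_le f g).trans (by omega)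
  unfold W3
  rw [add_assoc]
  refine s' _ _ _ (s _ _ _ ?_ ?_) ?_
  all_goals refine m _ _ _ _ ?_ (s _ _ _ (m _ _ _ _ ?_ ?_) (m _ _ _ _ ?_ ?_))
  all_goals first | assumption | (apply d; assumption) | (apply d; apply d; assumption)

theorem coprime_lin {a b : K} (h : a ≠ b) (m n : ℕ) :
    IsCoprime ((X - C a) ^ m : K[X]) ((X - C b) ^ n) :=
  (pairwise_coprime_X_sub_C Function.injective_id h).pow

theorem zero_of_dvd {a : K} {n : ℕ} {f : K[X]} (hf : f.natDegree < n) (h : (X - C a) ^ n ∣ f) : f = 0 := by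
  by_contra hne
  have := natDegree_le_of_dvd h hne
  rw [natDegree_pow, natDegree_X_sub_C] at this
  omega

theorem rel_zero_a {p q : K} (hp : p ≠ 0) (hpq : p ≠ q) {n : ℕ} (hn : 0 < n) {b c d : K[X]}
     (hc : c.natDegree < n) (hd : d.natDegree < n)
    (h : b * (X^n * (X - C q)^n) + c * (X - C p)^n + d * (X^n * (X - C p)^n) = 0) :
    b = 0 ∧ c = 0 ∧ d = 0 := by
  have hc0 : c = 0 := by
    apply zero_of_dvd (a := 0) hc
    apply (coprime_lin (Ne.symm hp) n n).dvd_of_dvd_mul_right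
    refine ⟨-(b * (X - C q)^n + d * (X - C p)^n), ?_⟩
    simp only [map_zero, sub_zero]
    linear_combination h
  have h2 : b * (X - C q)^n + d * (X - C p)^n = 0 := by
    apply mul_left_cancel₀ (pow_ne_zero n (X_ne_zero (R := K)))
    rw [hc0] at h; linear_combination h
  have hd0 : d = 0 := by
    apply zero_of_dvd (a := q) hd
    apply (coprime_lin (Ne.symm hpq) n n).dvd_of_dvd_mul_right
    exact ⟨-b, by linear_combination h2⟩
  refine ⟨?_, hc0, hd0⟩
  rw [hd0] at h2
  simpa [X_sub_C_ne_zero, hn.ne'] using h2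

theorem rel_zero_b {p q : K}  (hpq : p ≠ q) (hp : p ≠ 0) {n : ℕ} (hn : 0 < n) {a c d : K[X]}
    (ha : a.natDegree < n) (hc : c.natDegree < n) 
    (h : a * (X - C q)^n + c * (X - C p)^n + d * (X^n * (X - C p)^n) = 0) :
    a = 0 ∧ c = 0 ∧ d = 0 := by
  have ha0 : a = 0 := by
    apply zero_of_dvd (a := p) ha
    apply (coprime_lin hpq n n).dvd_of_dvd_mul_right
    exact ⟨-(c + d * X^n), by linear_combination h⟩
  have h2 : c + d * X^n = 0 := by
    apply mul_left_cancel₀ (pow_ne_zero n (X_sub_C_ne_zero p))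
    rw [ha0] at h; linear_combination h
  have hc0 : c = 0 := by
    apply zero_of_dvd (a := 0) hc
    exact ⟨-d, by simp only [map_zero, sub_zero]; linear_combination h2⟩
  refine ⟨ha0, hc0, ?_⟩
  rw [hc0] at h2
  simpa [hn.ne'] using h2

/-- the four basic polynomials -/
noncomputable def VV (l : K) (n : ℕ) : Fin 4 → K[X] :=
  ![(X - C 1)^n, X^n * (X - C 1)^n, (X - C l)^n, X^n * (X - C l)^n]

theorem rel_zero {l : K} (h0 : l ≠ 0) (h1 : l ≠ 1) {n : ℕ} (F : Fin 4 → K[X])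
    (hF : ∀ i, (F i).natDegree < n) (h : ∑ i, F i * VV l n i = 0) (i : Fin 4) (hi : F i = 0) :
    F = 0 := by
  have hn : 0 < n := by have := hF 0; omega
  simp only [Fin.sum_univ_four, VV, Matrix.cons_val] at h
  have : F 0 = 0 ∧ F 1 = 0 ∧ F 2 = 0 ∧ F 3 = 0 := by
    fin_cases i <;> simp only [Fin.zero_eta, Fin.mk_one, Fin.reduceFinMk] at hi
    · exact ⟨hi, rel_zero_a h0 h1 hn (hF 2) (hF 3) (by rw [hi] at h; linear_combination h)⟩
    · obtain ⟨a, b⟩ := rel_zero_b (p := l) (q := 1) h1 h0 hn (hF 0) (hF 2) (d := F 3) (by rw [hi] at h; linear_combination h)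
      exact ⟨a, hi, b⟩
    · obtain ⟨a, b, c⟩ := rel_zero_a (p := 1) (q := l) (b := F 3) one_ne_zero h1.symm hn (hF 0) (hF 1) (by rw [hi] at h; linear_combination h)
      exact ⟨b, c, hi, a⟩
    · obtain ⟨a, b, c⟩ := rel_zero_b (p := 1) (q := l) (d := F 1) h1.symm one_ne_zero hn (hF 2) (hF 0) (by rw [hi] at h; linear_combination h)
      exact ⟨b, c, a, hi⟩
  funext j
  fin_cases j
  · exact this.1
  · exact this.2.1
  · exact this.2.2.1
  · exact this.2.2.2

theorem natDegree_X_sub_C_pow_mul (a : K) (n : ℕ) : ((X - C a : K[X])^n).natDegree = n := by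
  rw [natDegree_pow, natDegree_X_sub_C, mul_one]

/-- Wronskian of the first three terms is nonzero, highly divisible and of bounded degree. -/
theorem wr_main {l : K} (h0 : l ≠ 0) (h1 : l ≠ 1) {n D : ℕ} (hD : D < n) (F : Fin 4 → K[X])
    (hF : ∀ i, (F i).natDegree ≤ D) (h : ∑ i, F i * VV l n i = 0) (hne : F ≠ 0) (r : K) (J : ℕ)
    (hr0 : r ≠ 0) (hr1 : r ≠ 1) (hrl : r ≠ l)
    (hJ : (X - C r) ^ J ∣ W3 (F 0 * VV l n 0) (F 1 * VV l n 1) (F 2 * VV l n 2)) :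
    6 * (n - 2) + J ≤ 3 * D + 4 * n := by
  have hnz : ∀ i, F i ≠ 0 := fun i hi => hne (rel_zero h0 h1 F (fun i => (hF i).trans_lt hD) h i hi)
  set g : Fin 4 → K[X] := fun i => F i * VV l n i with hg
  have hsum : g 0 + g 1 + g 2 + g 3 = 0 := by rw [← Fin.sum_univ_four]; exact h
  set w := W3 (g 0) (g 1) (g 2) with hw
  have hw0 : w ≠ 0 := by
    intro hz
    obtain ⟨α, β, γ, hab, hrel⟩ := wr3 hz
    have := rel_zero h0 h1 (n := n) ![C α * F 0, C β * F 1, C γ * F 2, 0] (by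
      intro i
      fin_cases i
      · exact (natDegree_C_mul_le _ _).trans_lt ((hF 0).trans_lt hD)
      · exact (natDegree_C_mul_le _ _).trans_lt ((hF 1).trans_lt hD)
      · exact (natDegree_C_mul_le _ _).trans_lt ((hF 2).trans_lt hD)
      · simp; omega) (by
      simp only [Fin.sum_univ_four, Matrix.cons_val]
      simp only [hg] at hrel
      linear_combination hrel) 3 (by simp)
    have e0 := congrFun this 0
    have e1 := congrFun this 1
    have e2 := congrFun this 2
    simp [hnz] at e0 e1 e2
    tauto
  have hV1 : ∀ i, VV l n i = ![(X - C 1)^n, X^n * (X - C 1)^n, (X - C l)^n, X^n * (X - C l)^n] i := fun i => rfl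
  have g3 : g 3 = - g 0 - g 1 - g 2 := by linear_combination hsum
  have dq : (X - C 1) ^ (2 * (n - 2)) ∣ w := by
    have : w = W3 (g 2) (g 0) (g 1) := by rw [hw]; unfold W3; ring
    rw [this]
    apply W3_dvd
    · simp [hg, hV1]
    · simp only [hg, hV1, Matrix.cons_val]; exact ⟨F 1 * X^n, by ring⟩
  have d0 : (X - C 0) ^ (2 * (n - 2)) ∣ w := by
    have : w = W3 (g 0) (g 3) (g 1) := by
      rw [hw, g3]; unfold W3; simp only [derivative_sub, derivative_neg]; ring
    rw [this]
    apply W3_dvd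
    · simp only [hg, hV1, Matrix.cons_val]; exact ⟨F 3 * (X - C l)^n, by simp; ring⟩
    · simp only [hg, hV1, Matrix.cons_val]; exact ⟨F 1 * (X - C 1)^n, by simp; ring⟩
  have dl : (X - C l) ^ (2 * (n - 2)) ∣ w := by
    have : w = W3 (g 0) (g 2) (g 3) := by
      rw [hw, g3]; unfold W3; simp only [derivative_sub, derivative_neg]; ring
    rw [this]
    apply W3_dvd
    · simp [hg, hV1]
    · simp only [hg, hV1, Matrix.cons_val]; exact ⟨F 3 * X^n, by ring⟩
  have e1 := (coprime_lin (Ne.symm (one_ne_zero (α := K))) (2*(n-2)) (2*(n-2))).mul_dvd d0 dq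
  have e2 := ((coprime_lin h0.symm (2*(n-2)) (2*(n-2))).mul_left
    (coprime_lin h1.symm (2*(n-2)) (2*(n-2)))).mul_dvd e1 dl
  have e3 := (((coprime_lin hr0.symm (2*(n-2)) J).mul_left
    (coprime_lin hr1.symm (2*(n-2)) J)).mul_left (coprime_lin hrl.symm (2*(n-2)) J)).mul_dvd e2 hJ
  have e4 := natDegree_le_of_dvd e3 hw0
  have pn : ∀ (a : K) (m : ℕ), (X - C a : K[X])^m ≠ 0 := fun a m => pow_ne_zero _ (X_sub_C_ne_zero a)
  rw [natDegree_mul (mul_ne_zero (mul_ne_zero (pn _ _) (pn _ _)) (pn _ _)) (pn _ _),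
    natDegree_mul (mul_ne_zero (pn _ _) (pn _ _)) (pn _ _), natDegree_mul (pn _ _) (pn _ _)] at e4
  simp only [natDegree_X_sub_C_pow_mul] at e4
  have m : ∀ (f g : K[X]) (M N : ℕ), f.natDegree ≤ M → g.natDegree ≤ N → (f*g).natDegree ≤ M + N :=
    fun f g M N h1 h2 => natDegree_mul_le.trans (by omega)
  have e5 : w.natDegree ≤ (D + n) + (D + (n + n)) + (D + n) := by
    apply W3_deg
    · exact m _ _ _ _ (hF 0) (natDegree_X_sub_C_pow_mul _ _).le
    · exact m _ _ _ _ (hF 1) (m _ _ _ _ (by simp) (natDegree_X_sub_C_pow_mul _ _).le)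
    · exact m _ _ _ _ (hF 2) (natDegree_X_sub_C_pow_mul _ _).le
  omega

/-- Non-proportionality at a point. -/
theorem exists_nonprop {l : K} (h0 : l ≠ 0) (h1 : l ≠ 1) {k : ℕ} (hk : 0 < k) (F : Fin 4 → K[X])
    (hF : ∀ i, (F i).natDegree ≤ 7 * k) (h : ∑ i, F i * VV l (10 * k) i = 0) (hne : F ≠ 0) (r : K)
    (hr0 : r ≠ 0) (hr1 : r ≠ 1) (hrl : r ≠ l) (c : Fin 4 → K) (hc : c 0 ≠ 0) :
    ∃ j ≤ k + 14, ¬ ∃ μ : K, ∀ i, (taylor r (F i * VV l (10 * k) i)).coeff j = μ * c i := by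
  by_contra hcon
  push Not at hcon
  set g : Fin 4 → K[X] := fun i => F i * VV l (10*k) i with hg
  have hd : (X - C r) ^ (k + 15) ∣ C (c 0) * g 1 - C (c 1) * g 0 := by
    rw [X_sub_C_pow_dvd_iff]
    have := X_pow_dvd_iff (f := taylor r (C (c 0) * g 1 - C (c 1) * g 0)) (n := k + 15)
    rw [taylor_apply] at this
    refine this.mpr ?_
    intro j hj
    obtain ⟨μ, hμ⟩ := hcon j (by omega)
    rw [← taylor_apply, map_sub, taylor_mul r (C (c 0)) (g 1), taylor_mul r (C (c 1)) (g 0), taylor_C, taylor_C, coeff_sub, coeff_C_mul, coeff_C_mul]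
    rw [hg]; beta_reduce; rw [hμ 0, hμ 1]; ring
  have hW : (X - C r) ^ (k + 13) ∣ W3 (g 0) (g 1) (g 2) := by
    have h2 : C (c 0) * W3 (g 0) (g 1) (g 2) = W3 (g 0) (C (c 0) * g 1 - C (c 1) * g 0) (g 2) := by
      unfold W3; simp only [derivative_sub, derivative_C_mul]; ring
    have h3 := W3_dvd' _ (g 0) _ (g 2) _ hd
    rw [← h2] at h3
    have h4 : IsUnit (C (c 0)) := isUnit_C.mpr hc.isUnit
    exact (h4.dvd_mul_left).mp h3
  have := wr_main h0 h1 (D := 7 * k) (n := 10 * k) (by omega) F hF h hne r (k+13) hr0 hr1 hrl hW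
  omega

end wr
end Polynomial.FPL

namespace Polynomial.FPL
section sieg

/-- integral two-variable version of the basic polynomials -/
noncomputable def VVZ (n : ℕ) : Fin 4 → ℤ[X][X] :=
  ![(X - C 1)^n, X^n * (X - C 1)^n, (X - C X)^n, X^n * (X - C X)^n]

theorem base_coeff (n m l : ℕ) (r : ℤ[X]) (hr : r = 1 ∨ r = X) :
    |(((X - C r)^n : ℤ[X][X]).coeff m).coeff l| ≤ 2^n ∧
    (n < m ∨ n < l → (((X - C r)^n : ℤ[X][X]).coeff m).coeff l = 0) := by
  have hb : ((n.choose m : ℕ) : ℤ) ≤ 2^n := by exact_mod_cast Nat.choose_le_two_pow n m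
  rw [sub_eq_add_neg, ← map_neg C r, coeff_X_add_C_pow]
  have e : ((-r)^(n-m) * ((n.choose m : ℕ) : ℤ[X])) = C ((-1)^(n-m) * (n.choose m : ℤ)) * r^(n-m) := by
    rw [neg_pow]; simp; ring
  rw [e, coeff_C_mul]
  have ha : |(-1:ℤ)^(n-m) * (n.choose m : ℤ)| = (n.choose m : ℤ) := by
    rw [abs_mul, abs_pow]; simp
  have hc : |(r^(n-m)).coeff l| ≤ 1 := by
    rcases hr with rfl | rfl
    · simp only [one_pow, coeff_one]; split_ifs <;> simp
    · simp only [coeff_X_pow]; split_ifs <;> simp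
  constructor
  · rw [abs_mul, ha]
    calc (n.choose m : ℤ) * _ ≤ (n.choose m : ℤ) * 1 := by gcongr
      _ ≤ _ := by simpa using hb
  · rintro (h | h)
    · simp [Nat.choose_eq_zero_of_lt h]
    · rcases hr with rfl | rfl
      · simp only [one_pow, coeff_one]
        rw [if_neg (by omega)]; simp
      · simp only [coeff_X_pow]
        rw [if_neg (by omega)]; simp

theorem VVZ_coeff (n m l : ℕ) (i : Fin 4) :
    |((VVZ n i).coeff m).coeff l| ≤ 2^n ∧
    (2 * n < m ∨ n < l → ((VVZ n i).coeff m).coeff l = 0) := by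
  have h2 : ∀ r : ℤ[X], (r = 1 ∨ r = X) → |((X^n * (X - C r)^n : ℤ[X][X]).coeff m).coeff l| ≤ 2^n ∧
    (2 * n < m ∨ n < l → ((X^n * (X - C r)^n : ℤ[X][X]).coeff m).coeff l = 0) := by
    intro r hr
    rw [coeff_X_pow_mul']
    split_ifs with h
    · have := base_coeff n (m-n) l r hr
      exact ⟨this.1, fun h => this.2 (by omega)⟩
    · simp
  have h1 : ∀ r : ℤ[X], (r = 1 ∨ r = X) → |(((X - C r)^n : ℤ[X][X]).coeff m).coeff l| ≤ 2^n ∧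
    (2 * n < m ∨ n < l → (((X - C r)^n : ℤ[X][X]).coeff m).coeff l = 0) := fun r hr =>
    ⟨(base_coeff n m l r hr).1, fun h => (base_coeff n m l r hr).2 (by omega)⟩
  fin_cases i
  · exact h1 1 (Or.inl rfl)
  · exact h2 1 (Or.inl rfl)
  · exact h1 X (Or.inr rfl)
  · exact h2 X (Or.inr rfl)

theorem mono_coeff (n a b m l : ℕ) (i : Fin 4) :
    |((monomial a (monomial b 1) * VVZ n i).coeff m).coeff l| ≤ 2^n ∧
    (2 * n + a < m ∨ n + b < l → ((monomial a (monomial b 1) * VVZ n i).coeff m).coeff l = 0) := by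
  have e : (monomial a (monomial b 1) : ℤ[X][X]) = X^a * C (X^b) := by
    rw [X_pow_mul, C_mul_X_pow_eq_monomial, X_pow_eq_monomial]
  rw [e, mul_assoc, coeff_X_pow_mul', coeff_C_mul]
  split_ifs with h
  · rw [coeff_X_pow_mul']
    split_ifs with h'
    · have := VVZ_coeff n (m-a) (l-b) i
      exact ⟨this.1, fun h => this.2 (by omega)⟩
    · simp
  · simp

attribute [local instance] Matrix.seminormedAddCommGroup

theorem siegel_aux (k : ℕ) (hk : 0 < k) : ∃ F : Fin 4 → ℤ[X][X], F ≠ 0 ∧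
    (∀ i a, 7 * k < a → (F i).coeff a = 0) ∧
    (∀ i a b, 500 * k ≤ b → ((F i).coeff a).coeff b = 0) ∧
    (∀ i a b, |((F i).coeff a).coeff b| ≤ 2^(1560*k)) ∧
    ∑ i, F i * VVZ (10 * k) i = 0 := by
  let A : Matrix (Fin (27*k+1) × Fin (510*k)) (Fin 4 × Fin (7*k+1) × Fin (500*k)) ℤ :=
    fun x y => ((monomial (y.2.1:ℕ) (monomial (y.2.2:ℕ) 1) * VVZ (10*k) y.1).coeff x.1).coeff x.2
  have hA : ‖A‖ ≤ 2^(10*k) := by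
    rw [Matrix.norm_le_iff (by positivity)]
    intro x y
    rw [Int.norm_eq_abs]
    exact_mod_cast (mono_coeff (10*k) y.2.1 y.2.2 x.1 x.2 y.1).1
  have cα : Fintype.card (Fin (27*k+1) × Fin (510*k)) = (27*k+1)*(510*k) := by simp
  have cβ : Fintype.card (Fin 4 × Fin (7*k+1) × Fin (500*k)) = 4 * ((7*k+1)*(500*k)) := by simp
  obtain ⟨t, ht0, htA, htn⟩ := Int.Matrix.exists_ne_zero_int_vec_norm_le A
    (by rw [cα, cβ]; nlinarith) (by rw [cα]; positivity)
  rw [cα, cβ] at htn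
  have hbase : ((4 * ((7*k+1)*(500*k)) : ℕ) : ℝ) * max 1 ‖A‖ ≤ 2^(26*k) := by
    have h1 : max 1 ‖A‖ ≤ 2^(10*k) := max_le (one_le_pow₀ (by norm_num)) hA
    have h2 : ((4 * ((7*k+1)*(500*k)) : ℕ)) ≤ 2^(16*k) := by
      have hk2 : k < 2^k := Nat.lt_two_pow_self
      have h3 : 2^(16*k) = 2^(14*k) * (2^k * 2^k) := by rw [← pow_add, ← pow_add]; congr 1; ring
      have h4 : 2^14 ≤ 2^(14*k) := Nat.pow_le_pow_right (by norm_num) (by omega)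
      rw [h3]
      calc 4 * ((7*k+1)*(500*k)) ≤ 4 * ((8*k)*(500*k)) := by gcongr; omega
        _ ≤ 2^14 * (k * k) := by nlinarith
        _ ≤ 2^(14*k) * (2^k*2^k) := by gcongr
    have h2' : ((4 * ((7*k+1)*(500*k)) : ℕ) : ℝ) ≤ 2^(16*k) := by exact_mod_cast h2
    calc _ ≤ (2:ℝ)^(16*k) * 2^(10*k) := by gcongr
      _ = _ := by rw [← pow_add]; congr 1; ring
  have hexp : (((27*k+1)*(510*k) : ℕ) : ℝ) / (((4 * ((7*k+1)*(500*k)) : ℕ) : ℝ) - (((27*k+1)*(510*k) : ℕ) : ℝ)) ≤ 60 := by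
    have hk' : (1:ℝ) ≤ k := by exact_mod_cast hk
    push_cast
    rw [div_le_iff₀ (by nlinarith)]
    nlinarith
  have hT : ‖t‖ ≤ 2^(1560*k) := by
    refine htn.trans ?_
    have hge1 : 1 ≤ ((4 * ((7*k+1)*(500*k)) : ℕ) : ℝ) * max 1 ‖A‖ := by
      have h1 : (1:ℝ) ≤ ((4 * ((7*k+1)*(500*k)) : ℕ) : ℝ) := by
        have : 1 ≤ (4 * ((7*k+1)*(500*k)) : ℕ) := by nlinarith
        exact_mod_cast this
      have h2 : (1:ℝ) ≤ max 1 ‖A‖ := le_max_left _ _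
      nlinarith
    calc _ ≤ (((4 * ((7*k+1)*(500*k)) : ℕ) : ℝ) * max 1 ‖A‖) ^ (60:ℝ) := Real.rpow_le_rpow_of_exponent_le hge1 hexp
      _ ≤ ((2:ℝ)^(26*k)) ^ (60:ℝ) := by gcongr
      _ = _ := by
        rw [show (60:ℝ) = ((60:ℕ):ℝ) by norm_num, Real.rpow_natCast, ← pow_mul]; congr 1; ring
  have hT' : ∀ y, |t y| ≤ 2^(1560*k) := by
    intro y
    have := (norm_le_pi_norm t y).trans hT
    rw [Int.norm_eq_abs] at this
    exact_mod_cast this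
  let F : Fin 4 → ℤ[X][X] := fun i => ∑ a : Fin (7*k+1), ∑ b : Fin (500*k), monomial (a:ℕ) (monomial (b:ℕ) (t (i,a,b)))
  have hF : ∀ i a b, ((F i).coeff a).coeff b =
      if h : a < 7*k+1 ∧ b < 500*k then t (i, ⟨a, h.1⟩, ⟨b, h.2⟩) else 0 := by
    intro i a b
    simp only [F, finset_sum_coeff, coeff_monomial]
    split_ifs with h
    · rw [Finset.sum_eq_single ⟨a, h.1⟩]
      · rw [Finset.sum_eq_single ⟨b, h.2⟩]
        · simp
        · intro b' _ hb'
          simp only [if_true, coeff_monomial]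
          exact if_neg fun hh => hb' (Fin.ext hh)
        · simp
      · intro a' _ ha'
        refine Finset.sum_eq_zero fun b' _ => ?_
        rw [if_neg fun hh => ha' (Fin.ext hh)]; simp
      · simp
    · refine Finset.sum_eq_zero fun a' _ => Finset.sum_eq_zero fun b' _ => ?_
      split_ifs with h1
      · rw [coeff_monomial, if_neg]
        intro h2
        exact h ⟨h1 ▸ a'.2, h2 ▸ b'.2⟩
      · simp
  refine ⟨F, ?_, ?_, ?_, ?_, ?_⟩
  · intro h0
    apply ht0
    funext ⟨i, a, b⟩
    have := hF i a b
    rw [dif_pos ⟨a.2, b.2⟩, h0] at this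
    simpa using this.symm
  · intro i a ha
    ext b
    rw [hF, dif_neg (by omega)]; simp
  · intro i a b hb
    rw [hF, dif_neg (by omega)]
  · intro i a b
    rw [hF]
    split_ifs
    · exact hT' _
    · simp
  · have hs : ∑ i, F i * VVZ (10*k) i = ∑ y : Fin 4 × Fin (7*k+1) × Fin (500*k),
        C (C (t y)) * (monomial (y.2.1:ℕ) (monomial (y.2.2:ℕ) 1) * VVZ (10*k) y.1) := by
      rw [Fintype.sum_prod_type]
      refine Finset.sum_congr rfl fun i _ => ?_
      rw [Fintype.sum_prod_type, Finset.sum_mul]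
      refine Finset.sum_congr rfl fun a _ => ?_
      rw [Finset.sum_mul]
      refine Finset.sum_congr rfl fun b _ => ?_
      rw [← mul_assoc, C_mul_monomial, C_mul_monomial, mul_one]
    rw [hs]
    ext m l
    simp only [finset_sum_coeff, coeff_C_mul, coeff_zero]
    by_cases hml : m < 27*k+1 ∧ l < 510*k
    · have := congrFun htA (⟨m, hml.1⟩, ⟨l, hml.2⟩)
      simp only [Matrix.mulVec, dotProduct, Pi.zero_apply, A] at this
      rw [← this]
      exact Finset.sum_congr rfl fun y _ => mul_comm _ _
    · refine Finset.sum_eq_zero fun y _ => ?_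
      have h1 := y.2.1.2
      have h2 := y.2.2.2
      rw [(mono_coeff (10*k) y.2.1 y.2.2 m l y.1).2 (by omega), mul_zero]

end sieg
end Polynomial.FPL

namespace Polynomial.FPL
section spec
variable {K : Type*} [Field K]

/-- uniform treatment of archimedean (`κ = 2`) and nonarchimedean (`κ = 1`) absolute values -/
structure Good (v : AbsoluteValue K ℝ) (κ : ℝ) : Prop where
  one_le : 1 ≤ κ
  add : ∀ a b, v (a + b) ≤ κ * max (v a) (v b)
  int : ∀ (m : ℕ) (n : ℤ), |n| ≤ 2^m → v (n : K) ≤ κ^m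

theorem v_nat_le (v : AbsoluteValue K ℝ) (n : ℕ) : v (n : K) ≤ n := by
  induction n with
  | zero => simp
  | succ n ih => 
    push_cast
    exact (v.add_le _ _).trans (by simpa using ih)

theorem v_int_le (v : AbsoluteValue K ℝ) (n : ℤ) : v (n : K) ≤ |n| := by
  rcases Int.natAbs_eq n with h | h
  · rw [h]; simpa using v_nat_le v n.natAbs
  · rw [h]; push_cast; rw [v.map_neg]; simpa using v_nat_le v n.natAbs

theorem good_two (v : AbsoluteValue K ℝ) : Good v 2 where
  one_le := by norm_num
  add a b := by
    have := v.add_le a b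
    have h1 := le_max_left (v a) (v b)
    have h2 := le_max_right (v a) (v b)
    linarith
  int m n h := (v_int_le v n).trans (by exact_mod_cast h)

theorem good_one (v : AbsoluteValue K ℝ) (hv : IsNonarchimedean v) : Good v 1 where
  one_le := le_rfl
  add a b := by simpa using hv a b
  int m n _ := by
    have hnat : ∀ n : ℕ, v (n : K) ≤ 1 := by
      intro n
      induction n with
      | zero => simp
      | succ n ih => push_cast; exact (hv _ _).trans (by simpa using ih)
    rw [one_pow]
    rcases Int.natAbs_eq n with h | h
    · rw [h]; simpa using hnat n.natAbs
    · rw [h]; push_cast; rw [v.map_neg]; simpa using hnat n.natAbs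

theorem Good.sum {v : AbsoluteValue K ℝ} {κ : ℝ} (h : Good v κ) {ι : Type*} (s : Finset ι) (f : ι → K)
    (B : ℝ) (hB : 0 ≤ B) (hf : ∀ i ∈ s, v (f i) ≤ B) : v (∑ i ∈ s, f i) ≤ κ^s.card * B := by
  induction s using Finset.induction_on with
  | empty => simpa using hB
  | insert a s ha ih =>
    rw [Finset.sum_insert ha, Finset.card_insert_of_notMem ha, pow_succ']
    refine (h.add _ _).trans ?_
    rw [mul_assoc]
    have h1 := h.one_le
    refine mul_le_mul_of_nonneg_left (max_le ?_ (ih fun i hi => hf i (Finset.mem_insert_of_mem hi))) (by linarith)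
    exact (hf a (Finset.mem_insert_self _ _)).trans (le_mul_of_one_le_left hB (one_le_pow₀ h1))

theorem spec_aux [CharZero K] (l : K) (k : ℕ) (hk : 0 < k) : ∃ G : Fin 4 → K[X], G ≠ 0 ∧
    (∀ i, (G i).natDegree ≤ 7 * k) ∧ ∑ i, G i * VV l (10 * k) i = 0 ∧
    ∀ (v : AbsoluteValue K ℝ) (κ : ℝ), Good v κ → ∀ i a,
      v ((G i).coeff a) ≤ κ^(2560*k) * max (v l) 1 ^ (500*k) := by
  obtain ⟨F, hF0, hFa, hFb, hFt, hrel⟩ := siegel_aux k hk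
  let φ : ℤ[X] →+* K[X] := (compRingHom (X + C l)).comp (mapRingHom (Int.castRingHom K))
  have hφ : ∀ f, φ f = taylor l (f.map (Int.castRingHom K)) := by
    intro f; simp [φ, taylor_apply]
  have hφinj : Function.Injective φ := by
    intro f g h
    rw [hφ, hφ] at h
    exact map_injective _ (RingHom.injective_int _) (taylor_injective l h)
  let Fm : Fin 4 → K[X][X] := fun i => (F i).map φ
  have hex : ∃ k0, ∃ i a, ((Fm i).coeff a).coeff k0 ≠ 0 := by
    by_contra hcon
    push Not at hcon
    apply hF0
    funext i
    apply map_injective φ hφinj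
    ext a k0
    simpa [Fm] using hcon k0 i a
  classical
  set k0 := Nat.find hex with hk0
  have hmin : ∀ j < k0, ∀ i a, ((Fm i).coeff a).coeff j = 0 := by
    intro j hj i a
    have := Nat.find_min hex hj
    push Not at this
    exact this i a
  have hdvd : ∀ i, ∃ Ft : K[X][X], Fm i = C (X^k0) * Ft := by
    intro i
    refine (C_dvd_iff_dvd_coeff _ _).mpr fun a => X_pow_dvd_iff.mpr fun j hj => hmin j hj i a
  choose Ft hFt' using hdvd
  have hcoeff : ∀ i a, ((Ft i).coeff a).coeff 0 = ((Fm i).coeff a).coeff k0 := by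
    intro i a
    rw [hFt' i, coeff_C_mul, coeff_X_pow_mul']
    simp
  have hexpl : ∀ i a, ((Fm i).coeff a).coeff k0 =
      ∑ b ∈ Finset.range (500*k), (b.choose k0 : K) * (((F i).coeff a).coeff b : K) * l^(b-k0) := by
    intro i a
    simp only [Fm, coeff_map]
    rw [hφ, taylor_coeff, hasseDeriv_apply]
    rw [sum_over_range' _ _ (500*k)]
    · rw [eval_finset_sum]
      refine Finset.sum_congr rfl fun b _ => ?_
      simp
    · have : ((map (Int.castRingHom K) ((F i).coeff a)).natDegree) ≤ 500 * k - 1 := by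
        rw [natDegree_le_iff_coeff_eq_zero]
        intro N hN
        rw [coeff_map, hFb i a N (by omega)]; simp
      omega
    · intro n; simp
  refine ⟨fun i => (Ft i).map (evalRingHom 0), ?_, ?_, ?_, ?_⟩
  · obtain ⟨i, a, h⟩ := Nat.find_spec hex
    intro h0
    have := congrFun h0 i
    have := congrArg (fun f => coeff f a) this
    simp only [coeff_map, coe_evalRingHom, ← coeff_zero_eq_eval_zero, hcoeff, Pi.zero_apply, coeff_zero] at this
    exact h this
  · intro i
    rw [natDegree_le_iff_coeff_eq_zero]
    intro N hN
    rw [coeff_map, coe_evalRingHom, ← coeff_zero_eq_eval_zero, hcoeff]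
    simp [Fm, hFa i N hN]
  · have h1 : ∑ i, Fm i * (VVZ (10*k) i).map φ = 0 := by
      have := congrArg (Polynomial.map φ) hrel
      simpa [Polynomial.map_sum, Fm] using this
    have h2 : ∑ i, Ft i * (VVZ (10*k) i).map φ = 0 := by
      apply mul_left_cancel₀ (a := C (X^k0 : K[X])) (by simp)
      rw [Finset.mul_sum, mul_zero, ← h1]
      exact Finset.sum_congr rfl fun i _ => by rw [hFt' i, mul_assoc]
    have h3 := congrArg (Polynomial.map (evalRingHom (0:K))) h2
    rw [Polynomial.map_sum] at h3
    simp only [Polynomial.map_mul, Polynomial.map_zero] at h3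
    rw [← h3]
    refine Finset.sum_congr rfl fun i _ => ?_
    congr 1
    have hX : φ X = X + C l := by rw [hφ]; simp
    fin_cases i <;> simp [VV, VVZ, hX]
  · intro v κ hg i a
    rw [coeff_map, coe_evalRingHom, ← coeff_zero_eq_eval_zero, hcoeff, hexpl]
    have hκ := hg.one_le
    have hκ0 : 0 ≤ κ := by linarith
    have hm : 1 ≤ max (v l) 1 := le_max_right _ _
    have := hg.sum (Finset.range (500*k)) (fun b => (b.choose k0 : K) * (((F i).coeff a).coeff b : K) * l^(b-k0))
      (κ^(500*k) * κ^(1560*k) * max (v l) 1^(500*k)) (by positivity) (by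
        intro b hb
        have hb := Finset.mem_range.mp hb
        rw [v.map_mul, v.map_mul, v.map_pow]
        have e1 : v (b.choose k0 : K) ≤ κ^(500*k) := by
          have := hg.int (500*k) (b.choose k0 : ℕ) (by
            rw [Nat.abs_cast]
            exact_mod_cast (Nat.choose_le_two_pow b k0).trans (Nat.pow_le_pow_right (by norm_num) hb.le))
          simpa using this
        have e2 := hg.int (1560*k) _ (hFt i a b)
        have e3 : v l ^ (b-k0) ≤ max (v l) 1^(500*k) := by
          calc v l ^ (b-k0) ≤ max (v l) 1 ^ (b-k0) := by gcongr; exact le_max_left _ _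
            _ ≤ _ := pow_le_pow_right₀ hm (by omega)
        gcongr)
    refine this.trans (le_of_eq ?_)
    rw [Finset.card_range, ← mul_assoc, ← pow_add, ← pow_add]
    congr 2
    ring

end spec
end Polynomial.FPL

namespace Polynomial.FPL
section strong
open Height Height.AdmissibleAbsValues
variable {K : Type*} [Field K]

theorem masterG [AdmissibleAbsValues K] {ι : Type*} [Fintype ι]
    (x A : K) (hA : A ≠ 0) (N : ℕ) (a : ι → K) (e : ι → ℕ)
    (h : ∀ (v : AbsoluteValue K ℝ) (κ : ℝ), Good v κ →
      max (v x) 1 * v A ≤ κ^N * ∏ i, max (v (a i)) 1 ^ e i) :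
    logHeight₁ x ≤ totalWeight K * N + ∑ i, e i * logHeight₁ (a i) := by
  have := _root_.FPL.master x A hA (2^N) (by positivity) a e (fun v _ => h v 2 (good_two v))
    (fun v hv => by simpa using h v 1 (good_one v (isNonarchimedean v hv)))
  rw [Real.log_pow] at this
  refine this.trans ?_
  have h2 : Real.log 2 ≤ 1 := by linarith [Real.log_two_lt_d9]
  gcongr
  nlinarith [Nat.cast_nonneg (α := ℝ) N]

/-- coefficient growth bound -/
def Bd (v : AbsoluteValue K ℝ) (L M : ℝ) (f : K[X]) : Prop := ∀ j, v (f.coeff j) ≤ L * M^j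

theorem Bd.mul1 {v : AbsoluteValue K ℝ} {κ L M : ℝ} (hg : Good v κ) (hL : 0 ≤ L) 
    {α : K} (hα : v α ≤ M) {f : K[X]} (hf : Bd v L M f) : Bd v (κ * L) M ((1 + C α * X) * f) := by
  have hM : 0 ≤ M := (v.nonneg _).trans hα
  have hκ : 0 ≤ κ := by linarith [hg.one_le]
  intro j
  rw [add_mul, one_mul, coeff_add, mul_assoc, mul_assoc]
  refine (hg.add _ _).trans ?_
  refine mul_le_mul_of_nonneg_left (max_le (hf j) ?_) hκ
  rw [coeff_C_mul, v.map_mul]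
  cases j with
  | zero => simp; positivity
  | succ j =>
    rw [coeff_X_mul, pow_succ]
    calc v α * v (f.coeff j) ≤ M * (L * M^j) := mul_le_mul hα (hf j) (v.nonneg _) hM
      _ = _ := by ring

theorem Bd.mulpow {v : AbsoluteValue K ℝ} {κ L M : ℝ} (hg : Good v κ) (hL : 0 ≤ L) 
    {α : K} (hα : v α ≤ M) {f : K[X]} (hf : Bd v L M f) (m : ℕ) :
    Bd v (κ^m * L) M ((1 + C α * X)^m * f) := by
  have hκ : 0 ≤ κ := by linarith [hg.one_le]
  induction m with
  | zero => simpa using hf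
  | succ m ih =>
    have := Bd.mul1 hg (by positivity) hα ih
    rwa [← mul_assoc, ← mul_assoc, ← pow_succ', ← pow_succ'] at this

theorem quad_bound {v : AbsoluteValue K ℝ} {κ R : ℝ} (hg : Good v κ) {A B D x : K}
    (h : A * x^2 + B * x + D = 0) (hA : v A ≤ R) (hB : v B ≤ R) (hD : v D ≤ R) :
    max (v x) 1 * v A ≤ κ * R := by
  have hR : 0 ≤ R := (v.nonneg _).trans hA
  have hκ := hg.one_le
  rcases le_or_gt (v x) 1 with h1 | h1
  · rw [max_eq_right h1, one_mul]; nlinarith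
  · rw [max_eq_left h1.le]
    have e : A * x * x = -(B * x + D) := by linear_combination h
    have e2 : v A * v x * v x ≤ κ * R * v x := by
      rw [← v.map_mul, ← v.map_mul, e, v.map_neg]
      refine (hg.add _ _).trans ?_
      rw [mul_assoc]
      refine mul_le_mul_of_nonneg_left (max_le ?_ ?_) (by linarith)
      · rw [v.map_mul]; gcongr
      · nlinarith
    have := le_of_mul_le_mul_right e2 (by linarith)
    linarith

theorem lin_bound {v : AbsoluteValue K ℝ} {κ R : ℝ} (hg : Good v κ) {B D x : K}
    (h : B * x + D = 0) (hB : v B ≤ R) (hD : v D ≤ R) :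
    max (v x) 1 * v B ≤ κ * R := by
  have hR : 0 ≤ R := (v.nonneg _).trans hB
  have hκ := hg.one_le
  have : v x * v B ≤ R := by
    rw [← v.map_mul, show x * B = - D by linear_combination h, v.map_neg]; exact hD
  rcases le_total (v x) 1 with h1 | h1
  · rw [max_eq_right h1, one_mul]; nlinarith
  · rw [max_eq_left h1]; nlinarith

variable [CharZero K]

/-- the auxiliary vectors -/
theorem aux_vec (l : K) (h0 : l ≠ 0) (h1 : l ≠ 1) (k : ℕ) (hk : 0 < k) (x y : K)
    (hx0 : x ≠ 0) (hx1 : x ≠ 1) (hxl : x ≠ l) (hxy : y * (x - 1) = x - l) (t s : K) :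
    ∃ E : Fin 4 → K, E 0 + E 1 * x^(10*k) + E 2 * y^(10*k) + E 3 * (x^(10*k) * y^(10*k)) = 0 ∧
    (¬ ∃ μ, E 0 = μ * l ∧ E 1 = - μ * t ∧ E 2 = - μ * s ∧ E 3 = μ * (t * s)) ∧
    ∀ (v : AbsoluteValue K ℝ) (κ : ℝ), Good v κ → ∀ i,
      v (E i) ≤ κ^(2596*k+29) * max (v x) 1 ^ (9*k+28) * max (v l) 1 ^ (501*k+14) := by
  obtain ⟨G, hG0, hGd, hrel, hGv⟩ := spec_aux l k hk
  have hp : x - l ≠ 0 := sub_ne_zero.mpr hxl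
  have hq : x - 1 ≠ 0 := sub_ne_zero.mpr hx1
  set p := x - l with hpdef
  set q := x - 1 with hqdef
  set n := 10 * k with hn
  let V : Fin 4 → K := fun i => (VV l n i).eval x
  have hV : V = ![q^n, x^n * q^n, p^n, x^n * p^n] := by
    funext i; fin_cases i <;> simp [V, VV, hpdef, hqdef]
  have hV0 : ∀ i, V i ≠ 0 := by
    intro i; rw [hV]; fin_cases i <;> simp [hx0, hp, hq]
  obtain ⟨j, hj, hnp⟩ := exists_nonprop h0 h1 hk G hGd hrel hG0 x hx0 hx1 hxl
    (fun i => V i * ![l, -t, -s, t * s] i) (by simp [hV0, h0])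
  let e1 : Fin 4 → ℕ := ![0, n, 0, n]
  let e2 : Fin 4 → ℕ := ![n, n, 0, 0]
  let e3 : Fin 4 → ℕ := ![0, 0, n, n]
  let U : Fin 4 → K[X] := fun i => ∑ a ∈ Finset.range (7*k+1), C ((G i).coeff a * x^a) *
    ((1 + C (p*q) * X)^(a + e1 i) * ((1 + C (x*p) * X)^(e2 i) * ((1 + C (x*q) * X)^(e3 i) * 1)))
  have hU : ∀ i, (taylor x (G i * VV l n i)).comp (C (x*p*q) * X) = C (V i) * U i := by
    intro i
    have hX : (taylor x X).comp (C (x*p*q) * X) = C x * (1 + C (p*q) * X) := by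
      simp; ring
    have hXl : (taylor x (X - C l)).comp (C (x*p*q) * X) = C p * (1 + C (x*q) * X) := by
      simp [hpdef]; ring
    have hX1 : (taylor x (X - C 1)).comp (C (x*p*q) * X) = C q * (1 + C (x*p) * X) := by
      simp [hqdef]; ring
    have hGi : (taylor x (G i)).comp (C (x*p*q) * X) =
        ∑ a ∈ Finset.range (7*k+1), C ((G i).coeff a * x^a) * (1 + C (p*q) * X)^a := by
      conv_lhs => rw [(G i).as_sum_range_C_mul_X_pow' (Nat.lt_succ_of_le (hGd i))]
      rw [map_sum, sum_comp]
      refine Finset.sum_congr rfl fun a _ => ?_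
      rw [taylor_mul, taylor_pow, mul_comp, pow_comp, hX, taylor_C, C_comp, mul_pow, C_mul (a := (G i).coeff a), C_pow, mul_assoc]
    have hVi : (taylor x (VV l n i)).comp (C (x*p*q) * X) = C (V i) *
      ((1 + C (p*q) * X)^(e1 i) * ((1 + C (x*p) * X)^(e2 i) * ((1 + C (x*q) * X)^(e3 i) * 1))) := by
      rw [hV]
      fin_cases i
      · simp only [VV, e1, e2, e3, Fin.zero_eta, Fin.mk_one, Fin.reduceFinMk, Matrix.cons_val, taylor_mul, taylor_pow, mul_comp, pow_comp, hX1, hXl, hX]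
        simp only [mul_pow, C_pow, C_mul]; ring
      · simp only [VV, e1, e2, e3, Fin.zero_eta, Fin.mk_one, Fin.reduceFinMk, Matrix.cons_val, taylor_mul, taylor_pow, mul_comp, pow_comp, hX1, hXl, hX]
        simp only [mul_pow, C_pow, C_mul]; ring
      · simp only [VV, e1, e2, e3, Fin.zero_eta, Fin.mk_one, Fin.reduceFinMk, Matrix.cons_val, taylor_mul, taylor_pow, mul_comp, pow_comp, hX1, hXl, hX]
        simp only [mul_pow, C_pow, C_mul]; ring
      · simp only [VV, e1, e2, e3, Fin.zero_eta, Fin.mk_one, Fin.reduceFinMk, Matrix.cons_val, taylor_mul, taylor_pow, mul_comp, pow_comp, hX1, hXl, hX]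
        simp only [mul_pow, C_pow, C_mul]; ring
    rw [taylor_mul, mul_comp, hGi, hVi, Finset.sum_mul, Finset.mul_sum]
    refine Finset.sum_congr rfl fun a _ => ?_
    rw [pow_add]; ring
  have hc : x * p * q ≠ 0 := mul_ne_zero (mul_ne_zero hx0 hp) hq
  have hcoef : ∀ i, (taylor x (G i * VV l n i)).coeff j * (x*p*q)^j = V i * (U i).coeff j := by
    intro i
    rw [← comp_C_mul_X_coeff, hU, coeff_C_mul]
  refine ⟨fun i => (U i).coeff j, ?_, ?_, ?_⟩
  · have hs : ∑ i, V i * (U i).coeff j = 0 := by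
      simp_rw [← hcoef]
      rw [← Finset.sum_mul, ← finset_sum_coeff, ← map_sum, hrel]; simp
    rw [Fin.sum_univ_four, hV] at hs
    simp only [Matrix.cons_val] at hs
    rw [← hxy, mul_pow] at hs
    apply mul_left_cancel₀ (pow_ne_zero n hq)
    linear_combination hs
  · rintro ⟨μ, m0, m1, m2, m3⟩
    beta_reduce at m0 m1 m2 m3
    apply hnp
    refine ⟨μ / (x*p*q)^j, fun i => ?_⟩
    have hcj : (x*p*q)^j ≠ 0 := pow_ne_zero _ hc
    rw [div_mul_eq_mul_div, eq_div_iff hcj, hcoef]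
    fin_cases i
    · simp only [Fin.zero_eta, Matrix.cons_val]; rw [m0]; ring
    · simp only [Fin.mk_one, Matrix.cons_val]; rw [m1]; ring
    · simp only [Fin.reduceFinMk, Matrix.cons_val]; rw [m2]; ring
    · simp only [Fin.reduceFinMk, Matrix.cons_val]; rw [m3]; ring
  · intro v κ hg i
    have hκ := hg.one_le
    have hκ0 : 0 ≤ κ := by linarith
    set mx := max (v x) 1 with hmx
    set ml := max (v l) 1 with hml
    have hmx1 : 1 ≤ mx := le_max_right _ _
    have hml1 : 1 ≤ ml := le_max_right _ _
    have hx' : v x ≤ mx := le_max_left _ _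
    have hl' : v l ≤ ml := le_max_left _ _
    have bp : v p ≤ κ * (mx * ml) := by
      rw [hpdef, sub_eq_add_neg]
      refine (hg.add _ _).trans (mul_le_mul_of_nonneg_left (max_le ?_ ?_) hκ0)
      · nlinarith
      · rw [v.map_neg]; nlinarith
    have bq : v q ≤ κ * mx := by
      rw [hqdef, sub_eq_add_neg]
      refine (hg.add _ _).trans (mul_le_mul_of_nonneg_left (max_le hx' ?_) hκ0)
      rw [v.map_neg, v.map_one]; exact hmx1
    set M := κ^2 * mx^2 * ml with hM
    have bpq : v (p*q) ≤ M := by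
      rw [v.map_mul]
      calc _ ≤ (κ * (mx * ml)) * (κ * mx) := mul_le_mul bp bq (v.nonneg _) (by positivity)
        _ = _ := by rw [hM]; ring
    have bxp : v (x*p) ≤ M := by
      rw [v.map_mul]
      calc _ ≤ mx * (κ * (mx * ml)) := mul_le_mul hx' bp (v.nonneg _) (by positivity)
        _ = 1 * (κ * mx^2 * ml) := by ring
        _ ≤ κ * (κ * mx^2 * ml) := by gcongr
        _ = _ := by rw [hM]; ring
    have bxq : v (x*q) ≤ M := by
      rw [v.map_mul]
      calc _ ≤ mx * (κ * mx) := mul_le_mul hx' bq (v.nonneg _) (by positivity)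
        _ = 1 * (κ * mx^2 * 1) := by ring
        _ ≤ κ * (κ * mx^2 * ml) := by gcongr
        _ = _ := by rw [hM]; ring
    have hM0 : 0 ≤ M := by positivity
    have hone : Bd v 1 M (1 : K[X]) := by
      intro j
      rw [coeff_one]
      split_ifs with h
      · subst h; simp
      · simpa using pow_nonneg hM0 j
    have hesum : e1 i + e2 i + e3 i ≤ 20 * k := by
      fin_cases i <;> simp [e1, e2, e3] <;> omega
    have hterm : ∀ a ∈ Finset.range (7*k+1), v ((C ((G i).coeff a * x^a) *
      ((1 + C (p*q) * X)^(a + e1 i) * ((1 + C (x*p) * X)^(e2 i) * ((1 + C (x*q) * X)^(e3 i) * 1)))).coeff j)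
        ≤ (κ^(2560*k) * ml^(500*k) * mx^(7*k)) * (κ^(27*k) * M^(k+14)) := by
      intro a ha
      have ha := Finset.mem_range.mp ha
      rw [coeff_C_mul, v.map_mul, v.map_mul, v.map_pow]
      have b1 := Bd.mulpow hg (by positivity) bpq (Bd.mulpow hg (by positivity) bxp
        (Bd.mulpow hg (by positivity) bxq hone (e3 i)) (e2 i)) (a + e1 i) j
      have hM1 : 1 ≤ M := by
        rw [hM]; exact one_le_mul_of_one_le_of_one_le (one_le_mul_of_one_le_of_one_le (one_le_pow₀ hκ) (one_le_pow₀ hmx1)) hml1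
      have b2 : κ^(a + e1 i) * (κ^(e2 i) * (κ^(e3 i) * 1)) * M^j ≤ κ^(27*k) * M^(k+14) := by
        rw [mul_one, ← pow_add, ← pow_add]
        exact mul_le_mul (pow_le_pow_right₀ hκ (by omega)) (pow_le_pow_right₀ hM1 (by omega)) (by positivity) (by positivity)
      have b3 : v x ^ a ≤ mx^(7*k) := by
        calc v x ^ a ≤ mx ^ a := by gcongr
          _ ≤ _ := pow_le_pow_right₀ hmx1 (by omega)
      exact mul_le_mul (mul_le_mul (hGv v κ hg i a) b3 (by positivity) (by positivity)) (b1.trans b2) (v.nonneg _) (by positivity)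
    have := hg.sum (Finset.range (7*k+1)) _ _ (by positivity) hterm
    rw [← finset_sum_coeff, Finset.card_range] at this
    refine this.trans ?_
    rw [hM]
    have hk28 : 9*k+28 = 7*k + 2*(k+14) := by ring
    rw [hk28, show 501*k+14 = 500*k + (k+14) by ring]
    have e : κ^(7*k+1) * (κ^(2560*k) * ml^(500*k) * mx^(7*k) * (κ^(27*k) * (κ^2 * mx^2*ml)^(k+14)))
      = κ^(2596*k+29) * mx^(7*k + 2*(k+14)) * ml^(500*k+(k+14)) := by
      have : 2596*k+29 = (7*k+1) + 2560*k + 27*k + 2*(k+14) := by ring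
      rw [this]
      simp only [pow_add, mul_pow, ← pow_mul]; ring
    exact e.le

theorem strong [AdmissibleAbsValues K] (l : K) (h0 : l ≠ 0) (h1 : l ≠ 1) (k : ℕ) (hk : 0 < k) (x y x2 y2 t s : K)
    (hx0 : x ≠ 0) (hx1 : x ≠ 1) (hxl : x ≠ l) (hxy : y * (x - 1) = x - l)
    (hxy2 : y2 * (x2 - 1) = x2 - l) (ht : t ≠ 0) (hs : s ≠ 0)
    (hx2 : x2 = t * x^(10*k)) (hy2 : y2 = s * y^(10*k)) :
    logHeight₁ x2 ≤ totalWeight K * (2596*k+32) + (9*k+28) * logHeight₁ x + (501*k+15) * logHeight₁ l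
      + logHeight₁ t + logHeight₁ s := by
  obtain ⟨E, hE, hnp, hEv⟩ := aux_vec l h0 h1 k hk x y hx0 hx1 hxl hxy t s
  set a0 := E 0
  set a1 := E 1 / t
  set a2 := E 2 / s
  set a3 := E 3 / (t * s)
  have hE1 : E 1 = a1 * t := by simp only [a1]; field_simp
  have hE2 : E 2 = a2 * s := by simp only [a2]; field_simp
  have hE3 : E 3 = a3 * (t*s) := by simp only [a3]; field_simp
  have hrel : a0 + a1 * x2 + a2 * y2 + a3 * (x2 * y2) = 0 := by
    rw [hx2, hy2]; rw [hE1, hE2, hE3] at hE; linear_combination hE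
  have hquad : (a1 + a3) * x2^2 + (a0 - a1 + a2 - l * a3) * x2 + -(a0 + l * a2) = 0 := by
    linear_combination (x2 - 1) * hrel - (a2 + a3 * x2) * hxy2
  have bnd : ∀ (v : AbsoluteValue K ℝ) (κ : ℝ), Good v κ → ∃ R, κ * R = κ^(2596*k+32) *
      ∏ i, max (v (![x, l, t⁻¹, s⁻¹] i)) 1 ^ (![9*k+28, 501*k+15, 1, 1] i) ∧
      v (a1 + a3) ≤ R ∧ v (a0 - a1 + a2 - l * a3) ≤ R ∧ v (-(a0 + l * a2)) ≤ R := by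
    intro v κ hg
    have hκ := hg.one_le
    have hκ0 : 0 ≤ κ := by linarith
    set mx := max (v x) 1 with hmx
    set ml := max (v l) 1 with hml
    set mt := max (v t⁻¹) 1 with hmt
    set ms := max (v s⁻¹) 1 with hms
    have hmx1 : 1 ≤ mx := le_max_right _ _
    have hml1 : 1 ≤ ml := le_max_right _ _
    have hmt1 : 1 ≤ mt := le_max_right _ _
    have hms1 : 1 ≤ ms := le_max_right _ _
    have hl' : v l ≤ ml := le_max_left _ _
    have ht' : v t⁻¹ ≤ mt := le_max_left _ _
    have hs' : v s⁻¹ ≤ ms := le_max_left _ _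
    set B := κ^(2596*k+29) * mx^(9*k+28) * ml^(501*k+14) with hB
    have hB0 : 0 ≤ B := by positivity
    set B' := B * mt * ms with hB'
    have hB'0 : 0 ≤ B' := by positivity
    have b0 : v a0 ≤ B' := by
      refine (hEv v κ hg 0).trans ?_
      calc B = B * 1 * 1 := by ring
        _ ≤ B * mt * ms := by gcongr
    have b1 : v a1 ≤ B' := by
      simp only [a1]
      rw [div_eq_mul_inv, v.map_mul]
      calc _ ≤ B * mt := mul_le_mul (hEv v κ hg 1) ht' (v.nonneg _) hB0
        _ = B * mt * 1 := by ring
        _ ≤ B * mt * ms := by gcongr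
    have b2 : v a2 ≤ B' := by
      simp only [a2]
      rw [div_eq_mul_inv, v.map_mul]
      calc _ ≤ B * ms := mul_le_mul (hEv v κ hg 2) hs' (v.nonneg _) hB0
        _ = B * 1 * ms := by ring
        _ ≤ B * mt * ms := by gcongr
    have b3 : v a3 ≤ B' := by
      simp only [a3]
      rw [div_eq_mul_inv, v.map_mul, mul_inv, v.map_mul, hB', mul_assoc]
      exact mul_le_mul (hEv v κ hg 3) (mul_le_mul ht' hs' (v.nonneg _) (by positivity)) (by positivity) hB0
    have bml : B' ≤ ml * B' := le_mul_of_one_le_left hB'0 hml1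
    have blA : ∀ z, v z ≤ B' → v (l * z) ≤ ml * B' := by
      intro z hz; rw [v.map_mul]; exact mul_le_mul hl' hz (v.nonneg _) (by positivity)
    have add' : ∀ z w Q, v z ≤ Q → v w ≤ Q → v (z + w) ≤ κ * Q := fun z w Q hz hw =>
      (hg.add z w).trans (mul_le_mul_of_nonneg_left (max_le hz hw) hκ0)
    have hkk : ∀ Q : ℝ, 0 ≤ Q → κ * Q ≤ κ * (κ * Q) := fun Q hQ =>
      mul_le_mul_of_nonneg_left (le_mul_of_one_le_left hQ hκ) hκ0
    refine ⟨κ * (κ * (ml * B')), ?_, ?_, ?_, ?_⟩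
    · rw [Fin.prod_univ_four]
      simp only [Matrix.cons_val]
      rw [← hmx, ← hml, ← hmt, ← hms, hB', hB, show 501*k+15 = 501*k+14+1 by ring, show 2596*k+32 = 2596*k+29+3 by ring]
      simp only [pow_add _ (501*k+14) 1, pow_add _ (2596*k+29) 3]; ring
    · exact (add' _ _ _ (b1.trans bml) (b3.trans bml)).trans (hkk _ (by positivity))
    · rw [show a0 - a1 + a2 - l * a3 = (a0 + - a1) + (a2 + -(l * a3)) by ring]
      apply add'
      · exact add' _ _ _ (b0.trans bml) (by rw [v.map_neg]; exact b1.trans bml)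
      · exact add' _ _ _ (b2.trans bml) (by rw [v.map_neg]; exact blA _ b3)
    · rw [v.map_neg]
      exact (add' _ _ _ (b0.trans bml) (blA _ b2)).trans (hkk _ (by positivity))
  have final : ∀ A : K, A ≠ 0 → (∀ (v : AbsoluteValue K ℝ) (κ : ℝ), Good v κ →
      max (v x2) 1 * v A ≤ κ^(2596*k+32) * ∏ i, max (v (![x, l, t⁻¹, s⁻¹] i)) 1 ^ (![9*k+28, 501*k+15, 1, 1] i)) →
      logHeight₁ x2 ≤ totalWeight K * (2596*k+32) + (9*k+28) * logHeight₁ x + (501*k+15) * logHeight₁ l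
      + logHeight₁ t + logHeight₁ s := by
    intro A hA h
    have := masterG x2 A hA (2596*k+32) _ _ h
    rw [Fin.sum_univ_four] at this
    simp only [Matrix.cons_val, logHeight₁_inv] at this
    push_cast at this
    linarith
  by_cases hA : a1 + a3 = 0
  · have hlin : (a0 - a1 + a2 - l * a3) * x2 + -(a0 + l * a2) = 0 := by
      rw [hA] at hquad; linear_combination hquad
    by_cases hB : a0 - a1 + a2 - l * a3 = 0
    · exfalso
      rw [hB, zero_mul, zero_add] at hlin
      apply hnp
      have h3 : a3 = - a1 := by linear_combination hA
      have h00 : a0 = - l * a2 := by linear_combination -hlin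
      have h21 : a2 = a1 := by
        have : (1 - l) * (a2 - a1) = 0 := by rw [h3, h00] at hB; linear_combination hB
        rcases mul_eq_zero.mp this with h | h
        · exact absurd (by linear_combination -h) h1
        · linear_combination h
      refine ⟨-a1, ?_, ?_, ?_, ?_⟩
      · rw [h00, h21]; ring
      · rw [hE1]; ring
      · rw [hE2, h21]; ring
      · rw [hE3, h3]
    · refine final _ hB fun v κ hg => ?_
      obtain ⟨R, hR, b1, b2, b3⟩ := bnd v κ hg
      rw [← hR]
      exact lin_bound hg hlin b2 b3
  · refine final _ hA fun v κ hg => ?_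
    obtain ⟨R, hR, b1, b2, b3⟩ := bnd v κ hg
    rw [← hR]
    exact quad_bound hg hquad b1 b2 b3

end strong
end Polynomial.FPL

namespace Polynomial.FPL
section threepts
open Height Height.AdmissibleAbsValues
variable {K : Type*} [Field K]

theorem Good.sub_one {v : AbsoluteValue K ℝ} {κ : ℝ} (h : Good v κ) (u : K) {m : ℝ}
    (hu : v u ≤ m) (hm : 1 ≤ m) : v (u - 1) ≤ κ * m := by
  have hκ := h.one_le
  rw [sub_eq_add_neg]
  refine (h.add _ _).trans (mul_le_mul_of_nonneg_left (max_le hu ?_) (by linarith))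
  rwa [v.map_neg, v.map_one]

theorem cross_bound {v : AbsoluteValue K ℝ} {κ : ℝ} (h : Good v κ) {a b c d : K} {m n : ℝ}
    (hm : 0 ≤ m) (hn : 0 ≤ n)
    (ha : v a ≤ κ * m) (hb : v b ≤ κ * n) (hc : v c ≤ κ * m) (hd : v d ≤ κ * n) :
    v (a * b - c * d) ≤ κ^3 * (m * n) := by
  have hκ := h.one_le
  rw [sub_eq_add_neg]
  have := h.add (a * b) (-(c*d))
  rw [v.map_neg, v.map_mul, v.map_mul] at this
  refine this.trans ?_
  have h1 : max (v a * v b) (v c * v d) ≤ (κ * m) * (κ * n) :=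
    max_le (mul_le_mul ha hb (v.nonneg _) (by positivity)) (mul_le_mul hc hd (v.nonneg _) (by positivity))
  calc _ ≤ κ * ((κ * m) * (κ * n)) := mul_le_mul_of_nonneg_left h1 (by linarith)
    _ = _ := by ring

theorem lam_le [AdmissibleAbsValues K] (x y : K) :
    logHeight₁ (x + y - x * y) ≤ totalWeight K * 2 + logHeight₁ x + logHeight₁ y := by
  have := masterG (x + y - x * y) 1 one_ne_zero 2 ![x, y] ![1, 1] (fun v κ hg => by
    have hκ := hg.one_le
    rw [Fin.prod_univ_two, v.map_one, mul_one]
    simp only [Matrix.cons_val, pow_one]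
    set a := max (v x) 1 with ha
    set b := max (v y) 1 with hb
    have ha1 : 1 ≤ a := le_max_right _ _
    have hb1 : 1 ≤ b := le_max_right _ _
    have hxa : v x ≤ a := le_max_left _ _
    have hyb : v y ≤ b := le_max_left _ _
    have h1 : v (x + y) ≤ κ * (a * b) := (hg.add _ _).trans (mul_le_mul_of_nonneg_left (max_le (by nlinarith) (by nlinarith)) (by linarith))
    have hab : 1 ≤ a * b := one_le_mul_of_one_le_of_one_le ha1 hb1
    have h2 : v (-(x * y)) ≤ κ * (a * b) := by
      rw [v.map_neg, v.map_mul]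
      have := mul_le_mul hxa hyb (v.nonneg _) (by linarith)
      nlinarith
    have h3 := (hg.add (x+y) (-(x*y))).trans (mul_le_mul_of_nonneg_left (max_le h1 h2) (by linarith))
    rw [← sub_eq_add_neg] at h3
    refine max_le (h3.trans (le_of_eq (by ring))) ?_
    have : 1 ≤ κ^2 := one_le_pow₀ hκ
    nlinarith)
  rw [Fin.sum_univ_two] at this
  simp only [Matrix.cons_val] at this
  push_cast at this
  linarith

theorem three_pts [AdmissibleAbsValues K] (l : K) (h1 : l ≠ 1) (x0 y0 u1 w1 u2 w2 : K)
    (hx0 : x0 ≠ 0) (hy0 : y0 ≠ 0)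
    (c0 : x0 * y0 - x0 - y0 + l = 0)
    (c1 : (x0 * u1) * (y0 * w1) - (x0 * u1) - (y0 * w1) + l = 0)
    (c2 : (x0 * u2) * (y0 * w2) - (x0 * u2) - (y0 * w2) + l = 0)
    (n1 : u1 ≠ 1) (n2 : u2 ≠ 1) (n3 : u1 ≠ u2) (ρ : ℝ)
    (hρ1 : logHeight₁ u1 + logHeight₁ w1 ≤ ρ) (hρ2 : logHeight₁ u2 + logHeight₁ w2 ≤ ρ) :
    logHeight₁ l ≤ totalWeight K * 10 + 4 * ρ ∧ logHeight₁ x0 ≤ totalWeight K * 4 + 2 * ρ := by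
  set N1 := (w1 - 1) * (u2 * w2 - 1) - (u1 * w1 - 1) * (w2 - 1) with hN1
  set N2 := (u1 * w1 - 1) * (u2 - 1) - (u1 - 1) * (u2 * w2 - 1) with hN2
  set N3 := (u1 - 1) * (w2 - 1) - (w1 - 1) * (u2 - 1) with hN3
  have r1 : -x0 * (u1 - 1) - y0 * (w1 - 1) + x0 * y0 * (u1 * w1 - 1) = 0 := by
    linear_combination c1 - c0
  have r2 : -x0 * (u2 - 1) - y0 * (w2 - 1) + x0 * y0 * (u2 * w2 - 1) = 0 := by
    linear_combination c2 - c0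
  have e21 : x0 * N2 = y0 * N1 := by
    linear_combination (-(u2 * w2 - 1)) * r1 * (-1) + (u1*w1-1) * r2 * (-1)
  have e32 : N2 * x0 + N3 = 0 := by
    apply mul_left_cancel₀ hy0
    linear_combination (u2 - 1) * r1 - (u1 - 1) * r2
  have e31 : N1 * y0 + N3 = 0 := by linear_combination e32 - e21
  have hx01 : x0 ≠ 1 := by
    rintro rfl; apply h1; linear_combination c0
  have hw : ∀ u w, (x0 * u) * (y0 * w) - (x0 * u) - (y0 * w) + l = 0 → u ≠ 1 → w ≠ 1 := by
    rintro u w c hu rfl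
    have h : x0 * (u - 1) * (y0 - 1) = 0 := by linear_combination c - c0
    have hy01 : y0 ≠ 1 := by
      rintro rfl; apply h1; linear_combination c0
    simp [hx0, sub_ne_zero.mpr hu, sub_ne_zero.mpr hy01] at h
  have hw1 := hw _ _ c1 n1
  have hw2 := hw _ _ c2 n2
  have hN2ne : N2 ≠ 0 := by
    intro h
    have hN3z : N3 = 0 := by rw [h] at e32; simpa using e32
    -- parallel
    have ha : u1 - 1 ≠ 0 := sub_ne_zero.mpr n1
    have hb : w1 - 1 ≠ 0 := sub_ne_zero.mpr hw1
    have key : (u2 - 1) * (w1 - 1) * (u1 - 1) * (u2 - u1) = 0 := by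
      rw [hN3] at hN3z
      rw [hN2] at h
      linear_combination -((u2 - 1) * (u1 - 1)) * hN3z - (u1 - 1) * (h + hN3z)
    simp [ha, hb, sub_ne_zero.mpr n2, sub_ne_zero.mpr n3.symm] at key
  have hN1ne : N1 ≠ 0 := by
    intro h
    rw [h] at e21
    simp [hx0, hN2ne] at e21
  have bounds : ∀ (v : AbsoluteValue K ℝ) (κ : ℝ), Good v κ → ∃ R, κ * R = κ^4 *
      ∏ i, max (v (![u1, w1, u2, w2] i)) 1 ^ (![1, 1, 1, 1] i) ∧ v N1 ≤ R ∧ v N2 ≤ R ∧ v N3 ≤ R := by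
    intro v κ hg
    have hκ := hg.one_le
    set a := max (v u1) 1 with ha
    set b := max (v w1) 1 with hb
    set c := max (v u2) 1 with hc
    set d := max (v w2) 1 with hd
    have ha1 : 1 ≤ a := le_max_right _ _
    have hb1 : 1 ≤ b := le_max_right _ _
    have hc1 : 1 ≤ c := le_max_right _ _
    have hd1 : 1 ≤ d := le_max_right _ _
    have ha' : v u1 ≤ a := le_max_left _ _
    have hb' : v w1 ≤ b := le_max_left _ _
    have hc' : v u2 ≤ c := le_max_left _ _
    have hd' : v w2 ≤ d := le_max_left _ _
    have hab : 1 ≤ a * b := one_le_mul_of_one_le_of_one_le ha1 hb1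
    have hcd : 1 ≤ c * d := one_le_mul_of_one_le_of_one_le hc1 hd1
    have s1 : v (u1 - 1) ≤ κ * (a * b) := hg.sub_one _ (by nlinarith) hab
    have s2 : v (w1 - 1) ≤ κ * (a * b) := hg.sub_one _ (by nlinarith) hab
    have s3 : v (u1 * w1 - 1) ≤ κ * (a * b) := hg.sub_one _ (by rw [v.map_mul]; gcongr) hab
    have s4 : v (u2 - 1) ≤ κ * (c * d) := hg.sub_one _ (by nlinarith) hcd
    have s5 : v (w2 - 1) ≤ κ * (c * d) := hg.sub_one _ (by nlinarith) hcd
    have s6 : v (u2 * w2 - 1) ≤ κ * (c * d) := hg.sub_one _ (by rw [v.map_mul]; gcongr) hcd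
    have p1 : 0 ≤ a * b := by linarith
    have p2 : 0 ≤ c * d := by linarith
    refine ⟨κ^3 * ((a * b) * (c * d)), ?_, cross_bound hg p1 p2 s2 s6 s3 s5, cross_bound hg p1 p2 s3 s4 s1 s6, cross_bound hg p1 p2 s1 s5 s2 s4⟩
    rw [Fin.prod_univ_four]
    simp only [Matrix.cons_val, pow_one]
    rw [← ha, ← hb, ← hc, ← hd]; ring
  have hX : logHeight₁ x0 ≤ totalWeight K * 4 + 2 * ρ := by
    have := masterG x0 N2 hN2ne 4 ![u1, w1, u2, w2] ![1, 1, 1, 1] (fun v κ hg => by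
      obtain ⟨R, hR, b1, b2, b3⟩ := bounds v κ hg
      rw [← hR]; exact lin_bound hg e32 b2 b3)
    rw [Fin.sum_univ_four] at this
    simp only [Matrix.cons_val] at this
    push_cast at this
    linarith
  have hY : logHeight₁ y0 ≤ totalWeight K * 4 + 2 * ρ := by
    have := masterG y0 N1 hN1ne 4 ![u1, w1, u2, w2] ![1, 1, 1, 1] (fun v κ hg => by
      obtain ⟨R, hR, b1, b2, b3⟩ := bounds v κ hg
      rw [← hR]; exact lin_bound hg e31 b1 b3)
    rw [Fin.sum_univ_four] at this
    simp only [Matrix.cons_val] at this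
    push_cast at this
    linarith
  have hl : l = x0 + y0 - x0 * y0 := by linear_combination c0
  have := lam_le x0 y0
  rw [← hl] at this
  exact ⟨by linarith, hX⟩

end threepts
end Polynomial.FPL

namespace Polynomial.FPL
section manypts
open Height Height.AdmissibleAbsValues

theorem det_pow_prime {R : Type*} [CommRing R] (p : ℕ) [hp : Fact p.Prime] {n : Type*} [Fintype n]
    [DecidableEq n] (M : Matrix n n R) :
    (p : R) ∣ (M.map (· ^ p)).det - M.det ^ p := by
  by_cases hu : IsUnit (p : R)
  · exact hu.dvd
  · haveI := CharP.quotient R p hu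
    rw [← Ideal.mem_span_singleton, ← Ideal.Quotient.eq_zero_iff_mem, map_sub, map_pow, RingHom.map_det, RingHom.map_det]
    set q := Ideal.Quotient.mk (Ideal.span {(p : R)})
    rw [← frobenius_def (R := R ⧸ Ideal.span {(p : R)}) p, RingHom.map_det, sub_eq_zero]
    congr 1

variable {K : Type*} [Field K]

/-- unit ball subring -/
def ball1 (v : AbsoluteValue K ℝ) (hv : IsNonarchimedean v) : Subring K where
  carrier := {x | v x ≤ 1}
  mul_mem' := by
    intro a b ha hb
    change v (a * b) ≤ 1
    rw [v.map_mul]; exact mul_le_one₀ ha (v.nonneg _) hb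
  one_mem' := by simp
  add_mem' := by
    intro a b ha hb
    exact (hv a b).trans (max_le ha hb)
  zero_mem' := by simp
  neg_mem' := by
    intro a ha
    simpa using ha

theorem det_nonarch (v : AbsoluteValue K ℝ) (hv : IsNonarchimedean v) (p : ℕ) [hp : Fact p.Prime]
    (M : Matrix (Fin 4) (Fin 4) K) (hM : ∀ i j, v (M i j) ≤ 1) (hd : M.det = 0) :
    v (M.map (· ^ p)).det ≤ v (p : K) := by
  let O := ball1 v hv
  let M' : Matrix (Fin 4) (Fin 4) O := fun i j => ⟨M i j, hM i j⟩
  obtain ⟨c, hc⟩ := det_pow_prime p M'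
  have h1 : M = M'.map O.subtype := by ext i j; rfl
  have h2 : M.det = O.subtype M'.det := by rw [RingHom.map_det]; rfl
  have h3 : (M.map (· ^ p)).det = O.subtype (M'.map (· ^ p)).det := by
    rw [RingHom.map_det]
    congr 1
  have h4 := congrArg O.subtype hc
  rw [map_sub, map_pow, ← h2, ← h3, hd, zero_pow hp.out.ne_zero, sub_zero, map_mul, map_natCast] at h4
  rw [h4, v.map_mul]
  have : v (O.subtype c) ≤ 1 := c.2
  exact mul_le_of_le_one_right (v.nonneg _) this

theorem det_arch (v : AbsoluteValue K ℝ) (p : ℕ)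
    (M : Matrix (Fin 4) (Fin 4) K) (hM : ∀ i j, v (M i j) ≤ 1) :
    v (M.map (· ^ p)).det ≤ 24 := by
  have := Matrix.det_le (A := M.map (· ^ p)) (abv := v) (x := 1) (fun i j => by
    rw [Matrix.map_apply, v.map_pow]; exact pow_le_one₀ (v.nonneg _) (hM i j))
  simpa [Nat.factorial] using this

/-- row matrix -/
def rowM (u w : Fin 4 → K) : Matrix (Fin 4) (Fin 4) K := Matrix.of fun i => ![1, u i, w i, u i * w i]

theorem scale (v : AbsoluteValue K ℝ) (u w : Fin 4 → K) (p : ℕ) : ∃ M : Matrix (Fin 4) (Fin 4) K,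
    (∀ i j, v (M i j) ≤ 1) ∧ ((rowM u w).det = 0 → M.det = 0) ∧
    v ((rowM u w).map (· ^ p)).det = (∏ i, max (v (u i)) 1 ^ p) * (∏ i, max (v (w i)) 1 ^ p) * v (M.map (· ^ p)).det := by
  have hc : ∀ u : K, ∃ c : K, v c = max (v u) 1 := by
    intro u
    rcases le_total (v u) 1 with h | h
    · exact ⟨1, by rw [max_eq_right h, v.map_one]⟩
    · exact ⟨u, by rw [max_eq_left h]⟩
  choose c hc using hc
  have hc0 : ∀ u, c u ≠ 0 := by
    intro u h
    have := hc u
    rw [h, v.map_zero] at this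
    linarith [le_max_right (v u) 1]
  let g : Fin 4 → K := fun i => c (u i) * c (w i)
  have hg0 : ∀ i, g i ≠ 0 := fun i => mul_ne_zero (hc0 _) (hc0 _)
  refine ⟨Matrix.of fun i j => (g i)⁻¹ * rowM u w i j, ?_, ?_, ?_⟩
  · intro i j
    rw [Matrix.of_apply, v.map_mul, map_inv₀, inv_mul_le_iff₀ (v.pos (hg0 i)), mul_one]
    simp only [g, v.map_mul, hc]
    have a1 := le_max_left (v (u i)) 1
    have a2 := le_max_right (v (u i)) 1
    have b1 := le_max_left (v (w i)) 1
    have b2 := le_max_right (v (w i)) 1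
    fin_cases j
    · simp [rowM]; nlinarith
    · simp [rowM]; nlinarith
    · simp [rowM]; nlinarith
    · simp only [rowM, Fin.reduceFinMk, Matrix.of_apply, Matrix.cons_val, v.map_mul]
      exact mul_le_mul a1 b1 (v.nonneg _) (by linarith)
  · intro h
    rw [Matrix.det_mul_column, h, mul_zero]
  · have e : (rowM u w).map (· ^ p) = Matrix.of fun i j => (g i)^p * ((Matrix.of fun i j => (g i)⁻¹ * rowM u w i j).map (· ^ p)) i j := by
      ext i j
      simp only [Matrix.map_apply, Matrix.of_apply]
      rw [← mul_pow, ← mul_assoc, mul_inv_cancel₀ (hg0 i), one_mul]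
    rw [e, Matrix.det_mul_column, v.map_mul, map_prod]
    congr 1
    rw [← Finset.prod_mul_distrib]
    refine Finset.prod_congr rfl fun i _ => ?_
    simp only [g]
    rw [v.map_pow, v.map_mul, hc, hc, mul_pow]

variable [CharZero K] [AdmissibleAbsValues K]

theorem det_zero (h29 : ∀ v ∈ archAbsVal (K := K), v 29 = 29) (hd : 0 < totalWeight K)
    (u w : Fin 4 → K) (hz : (rowM u w).det = 0)
    (hs : ∀ i, logHeight₁ (u i) + logHeight₁ (w i) ≤ totalWeight K / 1000) :
    ((rowM u w).map (· ^ 29)).det = 0 := by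
  by_contra hN
  set N := ((rowM u w).map (· ^ 29)).det with hNdef
  haveI : Fact (Nat.Prime 29) := ⟨by norm_num⟩
  have h29' : (29 : K) ≠ 0 := by norm_num
  have := _root_.FPL.master (0 : K) (N / 29) (div_ne_zero hN h29') (24/29) (by norm_num)
    (Sum.elim u w) (fun _ => 29) (by
      intro v hv
      obtain ⟨M, hM, h0, he⟩ := scale v u w 29
      rw [v.map_zero, max_eq_right zero_le_one, one_mul, map_div₀, h29 v hv, Fintype.prod_sum_type]
      simp only [Sum.elim_inl, Sum.elim_inr]
      rw [hNdef, he]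
      have := det_arch v 29 M hM
      have hP : 0 ≤ (∏ i, max (v (u i)) 1 ^ 29) * (∏ i, max (v (w i)) 1 ^ 29) := by positivity
      nlinarith) (by
      intro v hv
      obtain ⟨M, hM, h0, he⟩ := scale v u w 29
      rw [v.map_zero, max_eq_right zero_le_one, one_mul, map_div₀, Fintype.prod_sum_type]
      simp only [Sum.elim_inl, Sum.elim_inr]
      rw [hNdef, he, div_le_iff₀ (v.pos h29')]
      have := det_nonarch v (isNonarchimedean v hv) 29 M hM (h0 hz)
      have hP : 0 ≤ (∏ i, max (v (u i)) 1 ^ 29) * (∏ i, max (v (w i)) 1 ^ 29) := by positivity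
      exact mul_le_mul_of_nonneg_left (by simpa using this) hP)
  rw [logHeight₁_zero, Fintype.sum_sum_type] at this
  simp only [Sum.elim_inl, Sum.elim_inr] at this
  rw [← Finset.mul_sum, ← Finset.mul_sum, ← mul_add, ← Finset.sum_add_distrib] at this
  have h4 : ∑ i, (logHeight₁ (u i) + logHeight₁ (w i)) ≤ ∑ i : Fin 4, (totalWeight K / 1000 : ℝ) := Finset.sum_le_sum fun i _ => hs i
  have hl : Real.log (24/29) ≤ 24/29 - 1 := Real.log_le_sub_one_of_pos (by norm_num)
  simp at h4
  have hd' : (0:ℝ) < totalWeight K := by exact_mod_cast hd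
  push_cast at this
  nlinarith

theorem many_pts (h29 : ∀ v ∈ archAbsVal (K := K), v 29 = 29) (hd : 0 < totalWeight K)
    (l : K) (h0 : l ≠ 0) (h1 : l ≠ 1) (y : K → K) (x0 : K) (hx00 : x0 ≠ 0) (hx01 : x0 ≠ 1) (hx0l : x0 ≠ l)
    (hy0 : y x0 ≠ 0)
    (Z : Finset K) (hZ : ∀ x ∈ Z, x ≠ 1 ∧ y x * (x - 1) = x - l ∧
      logHeight₁ (x / x0) + logHeight₁ (y x / y x0) ≤ totalWeight K / 1000) : Z.card ≤ 58 := by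
  let r : K → Fin 4 → K := fun x => ![1, (x/x0)^29, (y x/y x0)^29, ((x/x0) * (y x / y x0))^29]
  have hlt : Submodule.span K (r '' Z) < ⊤ := by
    rw [lt_top_iff_ne_top]
    intro htop
    obtain ⟨f, hf, -, hli⟩ := Submodule.exists_fun_fin_finrank_span_eq K (r '' (Z : Set K))
    have hfr : Module.finrank K (Submodule.span K (r '' (Z : Set K))) = 4 := by
      rw [htop, finrank_top]; simp
    let f' : Fin 4 → Fin 4 → K := f ∘ Fin.cast hfr.symm
    have hli' : LinearIndependent K f' := hli.comp _ (Fin.cast_injective _)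
    have hf' : ∀ i, ∃ x ∈ Z, r x = f' i := fun i => hf (Fin.cast hfr.symm i)
    choose z hz hzf using hf'
    have hdet : ((rowM (fun i => z i / x0) (fun i => y (z i) / y x0)).map (· ^ 29)).det = 0 := by
      apply det_zero h29 hd
      · rw [← Matrix.exists_mulVec_eq_zero_iff]
        refine ⟨![l, -x0, -y x0, x0 * y x0], ?_, ?_⟩
        · intro h; exact h0 (by simpa using congrFun h 0)
        · ext i
          obtain ⟨-, hc, -⟩ := hZ _ (hz i)
          simp only [Matrix.mulVec, dotProduct, Fin.sum_univ_four, rowM, Matrix.of_apply, Matrix.cons_val, Pi.zero_apply]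
          field_simp
          linear_combination hc
      · exact fun i => (hZ _ (hz i)).2.2
    have hM : Matrix.of f' = (rowM (fun i => z i / x0) (fun i => y (z i) / y x0)).map (· ^ 29) := by
      ext i j
      rw [Matrix.of_apply, ← hzf i]
      fin_cases j <;> simp [r, rowM]
    rw [← hM] at hdet
    have hu := (Matrix.linearIndependent_rows_iff_isUnit (A := Matrix.of f')).mp hli'
    rw [Matrix.isUnit_iff_isUnit_det, hdet] at hu
    simp at hu
  obtain ⟨φ, hφ0, hφ⟩ := Submodule.exists_le_ker_of_lt_top _ hlt
  let e : Fin 4 → K := fun i => φ (Pi.single i 1)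
  have hφe : ∀ t, φ t = ∑ i, t i * e i := by
    intro t
    rw [LinearMap.pi_apply_eq_sum_univ φ t]
    simp only [smul_eq_mul, e]
    refine Finset.sum_congr rfl fun i _ => ?_
    congr 2
    ext j; simp [Pi.single_apply, eq_comm]
  let g : Fin 4 → K := ![1, x0^29, (y x0)^29, (x0 * y x0)^29]
  have hg : ∀ i, g i ≠ 0 := by intro i; fin_cases i <;> simp [g, hx00, hy0]
  let F : Fin 4 → K[X] := fun i => C (e i / g i)
  have hF0 : F ≠ 0 := by
    intro h
    apply hφ0
    ext t
    have : ∀ i, e i = 0 := fun i => by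
      have := congrFun h i
      simpa [F, hg i] using this
    simp [e] at this ⊢
    exact this t
  set P := ∑ i, F i * VV l 29 i with hP
  have hP0 : P ≠ 0 := by
    intro h
    have := wr_main h0 h1 (n := 29) (D := 0) (by norm_num) F (fun i => by simp [F]) h hF0 x0 0 hx00 hx01 hx0l (by simp)
    norm_num at this
  have hdeg : P.natDegree ≤ 58 := by
    refine natDegree_sum_le_of_forall_le _ _ fun i _ => ?_
    refine natDegree_mul_le.trans ?_
    have hl : ∀ a : K, ((X - C a : K[X])^29).natDegree = 29 := fun a => natDegree_X_sub_C_pow_mul a 29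
    have hV : (VV l 29 i).natDegree ≤ 58 := by
      fin_cases i
      · simp only [VV, Fin.zero_eta, Matrix.cons_val]; rw [hl]; norm_num
      · simp only [VV, Fin.mk_one, Matrix.cons_val]
        refine natDegree_mul_le.trans ?_
        rw [hl]; simp
      · simp only [VV, Fin.reduceFinMk, Matrix.cons_val]; rw [hl]; norm_num
      · simp only [VV, Fin.reduceFinMk, Matrix.cons_val]
        refine natDegree_mul_le.trans ?_
        rw [hl]; simp
    simp only [F, natDegree_C, zero_add]; exact hV
  have hroots : Z ⊆ P.roots.toFinset := by
    intro x hx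
    rw [Multiset.mem_toFinset, mem_roots hP0]
    obtain ⟨hx1, hc, -⟩ := hZ x hx
    have hk : φ (r x) = 0 := hφ (Submodule.subset_span ⟨x, hx, rfl⟩)
    rw [hφe, Fin.sum_univ_four] at hk
    have hpow : (x - l)^29 = (y x)^29 * (x-1)^29 := by rw [← hc, mul_pow]
    rw [IsRoot.def, hP, eval_finset_sum, Fin.sum_univ_four]
    simp only [F, VV, g, Matrix.cons_val, eval_mul, eval_C, eval_pow, eval_sub, eval_X, hpow]
    simp only [r, Matrix.cons_val, mul_pow, div_pow] at hk
    generalize (x - 1)^29 = q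
    linear_combination q * hk
  calc Z.card ≤ P.roots.toFinset.card := Finset.card_le_card hroots
    _ ≤ _ := Multiset.toFinset_card_le _
    _ ≤ _ := (card_roots' P).trans hdeg

end manypts
end Polynomial.FPL

namespace Polynomial.FPL
section counting
open Height Height.AdmissibleAbsValues _root_.FPL
variable {K : Type*} [Field K] [NumberField K]

theorem arch29 : ∀ v ∈ archAbsVal (K := K), v 29 = 29 := by
  intro v hv
  obtain ⟨φ, rfl⟩ := (mem_multisetInfinitePlace (K := K)).mp hv
  simp only [place_apply]
  rw [map_ofNat φ 29]
  norm_num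

/-- second coordinate -/
def yy (l x : K) : K := (x - l) / (x - 1)

/-- configuration of points -/
structure Cfg (T : Finset (HeightOneSpectrum (𝓞 K))) (l : K) (Z : Finset K) : Prop where
  l0 : l ≠ 0
  l1 : l ≠ 1
  ne0 : ∀ x ∈ Z, x ≠ 0
  ne1 : ∀ x ∈ Z, x ≠ 1
  nel : ∀ x ∈ Z, x ≠ l
  vx : ∀ x ∈ Z, ∀ x' ∈ Z, ∀ v : FinitePlace K, v.maximalIdeal ∉ T → v x = v x'
  vy : ∀ x ∈ Z, ∀ x' ∈ Z, ∀ v : FinitePlace K, v.maximalIdeal ∉ T → v (yy l x) = v (yy l x')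

variable {T : Finset (HeightOneSpectrum (𝓞 K))} {l : K} {Z : Finset K}

theorem yy_mul (l : K) {x : K} (h : x ≠ 1) : yy l x * (x - 1) = x - l := by
  rw [yy, div_mul_cancel₀ _ (sub_ne_zero.mpr h)]

theorem yy_height (l : K) {x : K} (h : x ≠ 1) :
    logHeight₁ (yy l x) ≤ totalWeight K * 2 + logHeight₁ x + logHeight₁ l := by
  have := masterG (yy l x) (x - 1) (sub_ne_zero.mpr h) 2 ![x, l] ![1, 1] (fun v κ hg => by
    have hκ := hg.one_le
    rw [Fin.prod_univ_two]
    simp only [Matrix.cons_val, pow_one]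
    set a := max (v x) 1 with ha
    set b := max (v l) 1 with hb
    have ha1 : 1 ≤ a := le_max_right _ _
    have hb1 : 1 ≤ b := le_max_right _ _
    have hxa : v x ≤ a := le_max_left _ _
    have hyb : v l ≤ b := le_max_left _ _
    have hab : 1 ≤ a * b := one_le_mul_of_one_le_of_one_le ha1 hb1
    have h1 : v (x - 1) ≤ κ * (a * b) := hg.sub_one x (by nlinarith) hab
    have h2 : v (-(x - l)) ≤ κ * (a * b) := by
      rw [v.map_neg, sub_eq_add_neg]
      refine (hg.add _ _).trans (mul_le_mul_of_nonneg_left (max_le (by nlinarith) ?_) (by linarith))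
      rw [v.map_neg]; nlinarith
    have := lin_bound (x := yy l x) hg (by linear_combination yy_mul l h) h1 h2
    refine this.trans (le_of_eq (by ring)))
  rw [Fin.sum_univ_two] at this
  simp only [Matrix.cons_val] at this
  push_cast at this
  linarith

/-- the log vector of a point -/
noncomputable def LL (T : Finset (HeightOneSpectrum (𝓞 K))) (l x : K) := ell T x (yy l x)

theorem Cfg.yne (h : Cfg T l Z) {x : K} (hx : x ∈ Z) : yy l x ≠ 0 :=
  div_ne_zero (sub_ne_zero.mpr (h.nel x hx)) (sub_ne_zero.mpr (h.ne1 x hx))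

theorem Cfg.norm_le (h : Cfg T l Z) {x : K} (hx : x ∈ Z) :
    ‖LL T l x‖ ≤ 4 * logHeight₁ x + 4 * (logHeight₁ l + totalWeight K) := by
  rw [LL, ell_norm T (h.ne0 x hx) (h.yne hx)]
  have := yy_height l (h.ne1 x hx)
  have := zero_le_logHeight₁ l
  linarith

theorem Cfg.sub (h : Cfg T l Z) {x c : K} (hx : x ∈ Z) (hc : c ∈ Z) (n : ℕ) (hn : 1 ≤ n) :
    ‖LL T l x - (n:ℝ) • LL T l c‖ = 2 * logHeight₁ (x / c^n) + 2 * logHeight₁ (yy l x / (yy l c)^n) :=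
  ell_sub T (h.ne0 c hc) (h.yne hc) (h.ne0 x hx) (h.yne hx) n hn (h.vx c hc x hx) (h.vy c hc x hx)

theorem Cfg.sub1 (h : Cfg T l Z) {x c : K} (hx : x ∈ Z) (hc : c ∈ Z) :
    ‖LL T l x - LL T l c‖ = 2 * logHeight₁ (x / c) + 2 * logHeight₁ (yy l x / (yy l c)) := by
  have := h.sub hx hc 1 le_rfl
  simpa using this

theorem Cfg.three (h : Cfg T l Z) {c a b : K} (hc : c ∈ Z) (ha : a ∈ Z) (hb : b ∈ Z) (hac : a ≠ c) (hbc : b ≠ c)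
    (hab : a ≠ b) (r : ℝ) (h1 : ‖LL T l a - LL T l c‖ ≤ r) (h2 : ‖LL T l b - LL T l c‖ ≤ r) :
    logHeight₁ l ≤ totalWeight K * 10 + 2 * r ∧ logHeight₁ c ≤ totalWeight K * 4 + r := by
  rw [h.sub1 ha hc] at h1
  rw [h.sub1 hb hc] at h2
  have c0 := h.ne0 c hc
  have y0 := h.yne hc
  have cv : ∀ x ∈ Z, x * yy l x - x - yy l x + l = 0 := fun x hx => by
    linear_combination yy_mul l (h.ne1 x hx)
  have := three_pts l h.l1 c (yy l c) (a / c) (yy l a / yy l c) (b / c) (yy l b / yy l c) c0 y0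
    (cv c hc) (by rw [mul_div_cancel₀ _ c0, mul_div_cancel₀ _ y0]; exact cv a ha)
    (by rw [mul_div_cancel₀ _ c0, mul_div_cancel₀ _ y0]; exact cv b hb)
    (by rwa [Ne, div_eq_one_iff_eq c0]) (by rwa [Ne, div_eq_one_iff_eq c0])
    (by rwa [Ne, div_left_inj' c0]) (r / 2) (by linarith) (by linarith)
  exact ⟨by linarith [this.1], by linarith [this.2]⟩

theorem card_le_two {α : Type*} (F : Finset α) (c : α) (hc : c ∈ F)
    (h : ∀ a ∈ F, ∀ b ∈ F, a ≠ c → b ≠ c → a ≠ b → False) : F.card ≤ 2 := by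
  have h1 : (F.erase c).card ≤ 1 := by
    rw [Finset.card_le_one]
    intro a ha b hb
    by_contra hab
    rw [Finset.mem_erase] at ha hb
    exact h a ha.2 b hb.2 ha.1 hb.1 hab
  rw [Finset.card_erase_of_mem hc] at h1
  omega

theorem Cfg.small (h : Cfg T l Z) (Z' : Finset K) (hZ' : Z' ⊆ Z) 
    (hs : ∀ x ∈ Z', logHeight₁ x ≤ 3000 * (logHeight₁ l + totalWeight K)) :
    (Z'.card : ℝ) ≤ 58 * 240080001 ^ (2 * sCard K T + 1) := by
  set H := logHeight₁ l + totalWeight K with hH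
  have hd : (0:ℝ) < totalWeight K := by exact_mod_cast totalWeight_pos K
  have hl := zero_le_logHeight₁ l
  have hH0 : 0 < H := by linarith
  have := _root_.FPL.pack Z' (LL T l) (12004 * H) (H / 10000) (by positivity) (by positivity)
    (fun z hz => (h.norm_le (hZ' hz)).trans (by linarith [hs z hz])) 58 (by
      intro c hc
      by_cases hbig : logHeight₁ l ≤ 11 * totalWeight K
      · refine many_pts arch29 (totalWeight_pos K) l h.l0 h.l1 (yy l) c (h.ne0 c (hZ' hc)) (h.ne1 c (hZ' hc))
          (h.nel c (hZ' hc)) (h.yne (hZ' hc)) _ ?_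
        intro x hx
        rw [Finset.mem_filter] at hx
        have hxZ := hZ' hx.1
        refine ⟨h.ne1 x hxZ, yy_mul l (h.ne1 x hxZ), ?_⟩
        have := hx.2
        rw [h.sub1 hxZ (hZ' hc)] at this
        linarith
      · push Not at hbig
        refine (card_le_two _ c ?_ ?_).trans (by norm_num)
        · rw [Finset.mem_filter]; exact ⟨hc, by simp; positivity⟩
        · intro a ha b hb hac hbc hab
          rw [Finset.mem_filter] at ha hb
          have := (h.three (hZ' hc) (hZ' ha.1) (hZ' hb.1) hac hbc hab _ ha.2.le hb.2.le).1
          linarith)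
  rw [ell_finrank] at this
  refine this.trans (le_of_eq ?_)
  have : 1 + 2 * (12004 * H) / (H / 10000) = 240080001 := by field_simp; norm_num
  rw [this]; norm_num

theorem Cfg.gap (h : Cfg T l Z) {a b : K} (ha : a ∈ Z) (hb : b ∈ Z)
    (hX : 3000 * (logHeight₁ l + totalWeight K) < logHeight₁ a)
    (hf : ‖(logHeight₁ b)⁻¹ • LL T l b - (logHeight₁ a)⁻¹ • LL T l a‖ ≤ 1 / 100) :
    logHeight₁ b ≤ 8000 * logHeight₁ a := by
  set H := logHeight₁ l + totalWeight K with hH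
  have hd : (0:ℝ) < totalWeight K := by exact_mod_cast totalWeight_pos K
  have hl := zero_le_logHeight₁ l
  have hH0 : 0 < H := by linarith
  set A := logHeight₁ a with hA
  set B := logHeight₁ b with hB
  by_contra hlt
  push Not at hlt
  have hA0 : 0 < A := by linarith
  have hB0 : 0 < B := by linarith
  set k := ⌊B / (10 * A)⌋₊ with hk
  have hk1 : (k : ℝ) ≤ B / (10 * A) := Nat.floor_le (by positivity)
  have hk2 : B / (10 * A) < k + 1 := Nat.lt_floor_add_one _
  rw [le_div_iff₀ (by positivity)] at hk1
  rw [div_lt_iff₀ (by positivity)] at hk2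
  have hk8 : (799 : ℝ) < k := by
    by_contra hc
    push Not at hc
    nlinarith
  have hk0 : 0 < k := by
    have : (0:ℝ) < k := by linarith
    exact_mod_cast this
  have e1 := h.sub hb ha (10 * k) (by omega)
  have hfa : ‖A⁻¹ • LL T l a‖ ≤ 5 := by
    rw [norm_smul, norm_inv, Real.norm_of_nonneg hA0.le, inv_mul_le_iff₀ hA0]
    have := h.norm_le ha
    linarith
  have e2 : LL T l b - ((10 * k : ℕ) : ℝ) • LL T l a =
      B • (B⁻¹ • LL T l b - A⁻¹ • LL T l a) + (B - 10 * k * A) • (A⁻¹ • LL T l a) := by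
    rw [smul_sub, smul_smul, mul_inv_cancel₀ hB0.ne', one_smul, sub_smul, mul_smul (10 * (k:ℝ)) A,
      smul_smul A, mul_inv_cancel₀ hA0.ne', one_smul]
    push_cast
    abel
  have e3 : ‖LL T l b - ((10 * k : ℕ) : ℝ) • LL T l a‖ ≤ B * (1/100) + (B - 10 * k * A) * 5 := by
    rw [e2]
    refine (norm_add_le _ _).trans ?_
    rw [norm_smul, norm_smul, Real.norm_of_nonneg hB0.le, Real.norm_of_nonneg (by linarith)]
    have : 0 ≤ B - 10 * k * A := by linarith
    gcongr
  rw [e1] at e3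
  have ha0 := h.ne0 a ha
  have hya := h.yne ha
  have hb0 := h.ne0 b hb
  have hyb := h.yne hb
  have st := strong l h.l0 h.l1 k hk0 a (yy l a) b (yy l b) (b / a^(10*k)) (yy l b / (yy l a)^(10*k))
    ha0 (h.ne1 a ha) (h.nel a ha) (yy_mul l (h.ne1 a ha)) (yy_mul l (h.ne1 b hb))
    (by positivity) (by positivity) (by field_simp) (by field_simp)
  rw [← hA, ← hB] at st
  have hkA : 799 * A ≤ k * A := by nlinarith
  have hkH : 799 * H ≤ k * H := by nlinarith
  have hkX : 3000 * (k * H) ≤ k * A := by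
    have : (k:ℝ) * (3000 * H) ≤ k * A := mul_le_mul_of_nonneg_left hX.le (by linarith)
    linarith
  have hb1 : (totalWeight K : ℝ) * (2596*k+32) + (501*k+15) * logHeight₁ l ≤ 2597 * (k * H) := by
    have p1 : 799 * (totalWeight K : ℝ) ≤ k * totalWeight K := by nlinarith
    have p2 : 799 * logHeight₁ l ≤ k * logHeight₁ l := by nlinarith
    have p3 : k * H = k * logHeight₁ l + k * totalWeight K := by rw [hH]; ring
    nlinarith
  nlinarith

theorem Cfg.cell (h : Cfg T l Z) (F : Finset K) (hF : F ⊆ Z)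
    (hX : ∀ x ∈ F, 3000 * (logHeight₁ l + totalWeight K) < logHeight₁ x)
    (hf : ∀ a ∈ F, ∀ b ∈ F, ‖(logHeight₁ b)⁻¹ • LL T l b - (logHeight₁ a)⁻¹ • LL T l a‖ ≤ 1 / 100) :
    F.card ≤ 12800002 := by
  rcases F.eq_empty_or_nonempty with rfl | hne
  · simp
  set H := logHeight₁ l + totalWeight K with hH
  have hd : (0:ℝ) < totalWeight K := by exact_mod_cast totalWeight_pos K
  have hl := zero_le_logHeight₁ l
  have hH0 : 0 < H := by linarith
  obtain ⟨m, hm, hmin⟩ := F.exists_min_image (fun x => logHeight₁ x) hne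
  set M := logHeight₁ m with hM
  have hM0 : 0 < M := by have := hX m hm; linarith
  have := _root_.FPL.pack F (fun x => logHeight₁ x) (8000 * M) (M / 400) (by positivity) (by positivity)
    (fun z hz => by
      rw [Real.norm_of_nonneg (zero_le_logHeight₁ z)]
      exact h.gap (hF hm) (hF hz) (hX m hm) (hf m hm z hz)) 2 (by
      intro c hc
      have close : ∀ a ∈ F, ‖logHeight₁ a - logHeight₁ c‖ < M / 400 → ‖LL T l a - LL T l c‖ ≤ logHeight₁ c / 40 := by
        intro a ha hac
        have hA := hX a ha
        have hC := hX c hc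
        have hA0 : 0 < logHeight₁ a := by linarith
        have hC0 : 0 < logHeight₁ c := by linarith
        have hMc : M ≤ logHeight₁ c := hmin c hc
        have hfa : ‖(logHeight₁ a)⁻¹ • LL T l a‖ ≤ 5 := by
          rw [norm_smul, norm_inv, Real.norm_of_nonneg hA0.le, inv_mul_le_iff₀ hA0]
          have := h.norm_le (hF ha)
          linarith
        have e : LL T l a - LL T l c = logHeight₁ c • ((logHeight₁ a)⁻¹ • LL T l a - (logHeight₁ c)⁻¹ • LL T l c)
            + (logHeight₁ a - logHeight₁ c) • ((logHeight₁ a)⁻¹ • LL T l a) := by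
          rw [smul_sub, smul_smul (logHeight₁ c) (logHeight₁ c)⁻¹, mul_inv_cancel₀ hC0.ne', one_smul, sub_smul,
            smul_smul (logHeight₁ a) (logHeight₁ a)⁻¹, mul_inv_cancel₀ hA0.ne', one_smul]
          abel
        rw [e]
        refine (norm_add_le _ _).trans ?_
        rw [norm_smul, norm_smul, Real.norm_of_nonneg hC0.le]
        have q1 := hf c hc a ha
        have q2 : logHeight₁ c * ‖(logHeight₁ a)⁻¹ • LL T l a - (logHeight₁ c)⁻¹ • LL T l c‖ ≤ logHeight₁ c * (1/100) :=
          mul_le_mul_of_nonneg_left q1 hC0.le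
        have q3 := mul_le_mul hac.le hfa (norm_nonneg _) (by positivity)
        linarith
      refine card_le_two _ c ?_ ?_
      · rw [Finset.mem_filter]; exact ⟨hc, by simp; positivity⟩
      · intro a ha b hb hac hbc hab
        rw [Finset.mem_filter] at ha hb
        have := (h.three (hF hc) (hF ha.1) (hF hb.1) hac hbc hab _ (close a ha.1 ha.2) (close b hb.1 hb.2)).2
        have := hX c hc
        linarith)
  have e : 1 + 2 * (8000 * M) / (M / 400) = 6400001 := by field_simp; norm_num
  rw [e] at this
  norm_num at this
  exact_mod_cast this

theorem Cfg.large (h : Cfg T l Z) (Z' : Finset K) (hZ' : Z' ⊆ Z) 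
    (hX : ∀ x ∈ Z', 3000 * (logHeight₁ l + totalWeight K) < logHeight₁ x) :
    (Z'.card : ℝ) ≤ 12800002 * 2001 ^ (2 * sCard K T + 1) := by
  have hd : (0:ℝ) < totalWeight K := by exact_mod_cast totalWeight_pos K
  have hl := zero_le_logHeight₁ l
  have := _root_.FPL.pack Z' (fun x => (logHeight₁ x)⁻¹ • LL T l x) 5 (1/200) (by norm_num) (by norm_num)
    (fun z hz => by
      have hz1 := hX z hz
      have hz0 : 0 < logHeight₁ z := by linarith
      rw [norm_smul, norm_inv, Real.norm_of_nonneg hz0.le, inv_mul_le_iff₀ hz0]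
      have := h.norm_le (hZ' hz)
      linarith) 12800002 (by
      intro c hc
      refine h.cell _ ((Finset.filter_subset _ _).trans hZ') (fun x hx => hX x (Finset.mem_filter.mp hx).1) ?_
      intro a ha b hb
      have ha := (Finset.mem_filter.mp ha).2
      have hb := (Finset.mem_filter.mp hb).2
      have := norm_sub_le_norm_sub_add_norm_sub ((logHeight₁ b)⁻¹ • LL T l b) ((logHeight₁ c)⁻¹ • LL T l c) ((logHeight₁ a)⁻¹ • LL T l a)
      rw [norm_sub_rev ((logHeight₁ c)⁻¹ • LL T l c)] at this
      linarith)
  rw [ell_finrank] at this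
  refine this.trans (le_of_eq ?_)
  norm_num

theorem Cfg.main (h : Cfg T l Z) : (Z.card : ℝ) ≤ Cconst 3 (sCard K T) := by
  have h1 := h.small (Z.filter fun x => logHeight₁ x ≤ 3000 * (logHeight₁ l + totalWeight K)) (Finset.filter_subset _ _)
    (fun x hx => (Finset.mem_filter.mp hx).2)
  have h2 := h.large (Z.filter fun x => ¬ logHeight₁ x ≤ 3000 * (logHeight₁ l + totalWeight K)) (Finset.filter_subset _ _)
    (fun x hx => not_le.mp (Finset.mem_filter.mp hx).2)
  have h3 := Finset.card_filter_add_card_filter_not (s := Z) (fun x => logHeight₁ x ≤ 3000 * (logHeight₁ l + totalWeight K))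
  set s := sCard K T with hs
  have hs1 : 1 ≤ s := by
    have : 0 < Fintype.card (InfinitePlace K) := Fintype.card_pos
    rw [hs, sCard]; omega
  have hs1' : (1:ℝ) ≤ s := by exact_mod_cast hs1
  have h4 : (Z.card : ℝ) ≤ (250000000:ℝ) ^ (4 * s) := by
    rw [← h3]
    push_cast
    have a1 : (240080001:ℝ) ^ (2*s+1) ≤ 250000000 ^ (2*s+1) := by gcongr; norm_num
    have a2 : (2001:ℝ) ^ (2*s+1) ≤ 250000000 ^ (2*s+1) := by gcongr; norm_num
    have a3 : (250000000:ℝ) ^ (2*s+1) * 250000000 ≤ 250000000 ^ (4*s) := by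
      rw [← pow_succ]
      exact pow_le_pow_right₀ (by norm_num) (by omega)
    have a4 : (0:ℝ) ≤ 250000000 ^ (2*s+1) := by positivity
    linarith
  refine h4.trans ?_
  have h5 : (250000000:ℝ) ≤ Real.exp 20 := by
    have := Real.exp_one_gt_d9
    have e : Real.exp 20 = (Real.exp 1)^20 := by rw [← Real.exp_nat_mul]; norm_num
    rw [e]
    calc (250000000:ℝ) ≤ 2.7 ^ 20 := by norm_num
      _ ≤ _ := by gcongr; linarith
  calc (250000000:ℝ) ^ (4 * s) ≤ (Real.exp 20)^(4*s) := by gcongr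
    _ = Real.exp (80 * s) := by rw [← Real.exp_nat_mul]; push_cast; ring_nf
    _ ≤ _ := by
      rw [Cconst]
      apply Real.exp_le_exp.mpr
      norm_num
      linarith

end counting
end Polynomial.FPL

namespace Polynomial.FPL
section reduction
variable {K : Type*} [Field K] [NumberField K]

theorem exists_notMem_T (T : Finset (HeightOneSpectrum (𝓞 K))) : ∃ v, v ∉ T := by
  by_contra hcon
  push Not at hcon
  set N : ℕ := ∏ w ∈ T, Ideal.absNorm w.asIdeal with hN
  have hN0 : N ≠ 0 := by
    rw [hN, Finset.prod_ne_zero_iff]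
    intro w _
    exact (Ideal.absNorm_ne_zero_iff_mem_nonZeroDivisors).mpr
      (mem_nonZeroDivisors_of_ne_zero w.ne_bot)
  have hnu : ¬ IsUnit (((N + 1 : ℕ) : 𝓞 K)) := by
    intro hu
    have h1 := hu.map (Algebra.norm ℤ)
    have h2 : ((N + 1 : ℕ) : 𝓞 K) = algebraMap ℤ (𝓞 K) ((N+1 : ℕ) : ℤ) := by simp
    rw [h2, Algebra.norm_algebraMap] at h1
    have hd : Module.finrank ℤ (𝓞 K) ≠ 0 := by
      rw [RingOfIntegers.rank]; exact Module.finrank_pos.ne'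
    rw [isUnit_pow_iff hd, Int.isUnit_iff] at h1
    omega
  obtain ⟨M, hM, hmem⟩ := exists_max_ideal_of_mem_nonunits hnu
  have hMbot : M ≠ ⊥ := by
    rintro rfl
    rw [Ideal.mem_bot] at hmem
    have : (N + 1 : ℕ) = 0 := by exact_mod_cast hmem
    omega
  let v : HeightOneSpectrum (𝓞 K) := ⟨M, hM.isPrime, hMbot⟩
  have hNM : ((N : ℕ) : 𝓞 K) ∈ M := by
    have hdvd : Ideal.absNorm v.asIdeal ∣ N := Finset.dvd_prod_of_mem _ (hcon v)
    obtain ⟨c, hc⟩ := hdvd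
    rw [hc]
    push_cast
    exact M.mul_mem_right _ (Ideal.absNorm_mem v.asIdeal)
  apply hM.ne_top
  rw [Ideal.eq_top_iff_one]
  have := M.sub_mem hmem hNM
  simpa using this

theorem val_eq (v : HeightOneSpectrum (𝓞 K)) {x : K} (hx : x ≠ 0) :
    v.valuation K x = WithZero.exp (-(ordAt v x)) := by
  rw [ordAt, dif_neg hx, neg_neg]
  exact (WithZero.coe_unzero _).symm

theorem val_div {v : HeightOneSpectrum (𝓞 K)} {x y x' y' : K} (hx : x ≠ 0) (hy : y ≠ 0)
    (hx' : x' ≠ 0) (hy' : y' ≠ 0) (h : ordAt v x - ordAt v y = ordAt v x' - ordAt v y') :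
    v.valuation K (x / y) = v.valuation K (x' / y') := by
  rw [map_div₀, map_div₀, val_eq v hx, val_eq v hy, val_eq v hx', val_eq v hy',
    ← WithZero.exp_sub, ← WithZero.exp_sub]
  congr 1
  omega

theorem place_eq (v : FinitePlace K) {x x' : K}
    (h : v.maximalIdeal.valuation K x = v.maximalIdeal.valuation K x') : v x = v x' := by
  rw [← FinitePlace.mk_maximalIdeal v, FinitePlace.mk_apply, FinitePlace.mk_apply,
    FinitePlace.norm_embedding', FinitePlace.norm_embedding', h]

/-- determinant of representatives -/
noncomputable def dett (Q P : P1 K) : K := P.rep 0 * Q.rep 1 - P.rep 1 * Q.rep 0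

theorem dett_ne {Q P : P1 K} (h : P ≠ Q) : dett Q P ≠ 0 := by
  intro h0
  apply h
  rw [← P.mk_rep, ← Q.mk_rep, Projectivization.mk_eq_mk_iff']
  rw [dett] at h0
  by_cases hq : Q.rep 0 = 0
  · have hq1 : Q.rep 1 ≠ 0 := by
      intro hq1
      apply Q.rep_nonzero
      ext i; fin_cases i <;> simp [hq, hq1]
    have hp : P.rep 0 = 0 := by
      rw [hq] at h0; simpa [hq1] using h0
    refine ⟨P.rep 1 / Q.rep 1, ?_⟩
    ext i; fin_cases i
    · simp [hq, hp]
    · simp; field_simp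
  · refine ⟨P.rep 0 / Q.rep 0, ?_⟩
    ext i; fin_cases i
    · simp; field_simp
    · simp; field_simp; linear_combination h0

/-- logDist in terms of dett -/
theorem ord_of_logDist {v : HeightOneSpectrum (𝓞 K)} {P Q Q' : P1 K} (h1 : P ≠ Q) (h2 : P ≠ Q')
    (h : logDist v P Q = logDist v P Q') : ordAt v (dett Q P) - ordAt v (dett Q' P) =
      minOrd v (Q.rep 0) (Q.rep 1) - minOrd v (Q'.rep 0) (Q'.rep 1) := by
  rw [logDist, logDist, if_neg h1, if_neg h2] at h
  have h' := WithTop.coe_injective h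
  rw [dett, dett]
  omega

theorem ne_of_logDist {v : HeightOneSpectrum (𝓞 K)} {P Q Q' : P1 K} (hQ : Q ≠ Q')
    (h : logDist v P Q = logDist v P Q') : P ≠ Q ∧ P ≠ Q' := by
  constructor
  · rintro rfl
    rw [logDist, logDist, if_pos rfl, if_neg hQ] at h
    exact WithTop.top_ne_coe h
  · rintro rfl
    rw [logDist, logDist, if_pos rfl, if_neg hQ.symm] at h
    exact WithTop.coe_ne_top h

/-- Plücker relation -/
theorem plucker (A B C P : P1 K) :
    dett A P * dett B C - dett A C * dett B P = dett B A * dett C P := by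
  simp only [dett]; ring

theorem dett_swap (A B : P1 K) : dett A B = - dett B A := by simp only [dett]; ring

/-- cross-ratio coordinate -/
noncomputable def xx (Q : Fin 4 → P1 K) (P : P1 K) : K :=
  (dett (Q 0) P / dett (Q 1) P) * (dett (Q 1) (Q 3) / dett (Q 0) (Q 3))

theorem xx_sub (Q : Fin 4 → P1 K) (hQ : Function.Injective Q) {P R : P1 K} (hP : P ≠ Q 1)
    (hR : R ≠ Q 1) : xx Q P - xx Q R = (dett (Q 1) (Q 3) / dett (Q 0) (Q 3)) *
      (dett (Q 1) (Q 0) / dett (Q 1) R) * (dett R P / dett (Q 1) P) := by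
  have h1 := dett_ne hP
  have h2 := dett_ne hR
  have h3 : dett (Q 0) (Q 3) ≠ 0 := dett_ne (hQ.ne (by decide))
  have hp := plucker (Q 0) (Q 1) R P
  rw [xx, xx]
  field_simp
  linear_combination dett (Q 1) (Q 3) * hp

theorem cfg_of (T : Finset (HeightOneSpectrum (𝓞 K)))
    (Q : Fin 4 → P1 K) (hQ : Function.Injective Q) (F : Finset (P1 K))
    (hF : ∀ P ∈ F, ∀ v ∉ T,
        logDist v P (Q 0) = logDist v P (Q 1) ∧
        logDist v P (Q 2) = logDist v P (Q 3)) :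
    (F.card : ℝ) ≤ Cconst 3 (sCard K T) := by
  obtain ⟨w, hw⟩ := exists_notMem_T T
  have hne : ∀ P ∈ F, ∀ i, P ≠ Q i := by
    intro P hP i
    have h01 := ne_of_logDist (hQ.ne (by decide)) (hF P hP w hw).1
    have h23 := ne_of_logDist (hQ.ne (by decide)) (hF P hP w hw).2
    fin_cases i
    exacts [h01.1, h01.2, h23.1, h23.2]
  have hLL : ∀ P ∈ F, ∀ i, dett (Q i) P ≠ 0 := fun P hP i => dett_ne (hne P hP i)
  have hq : ∀ i j, i ≠ j → dett (Q i) (Q j) ≠ 0 := fun i j hij => dett_ne (hQ.ne hij.symm)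
  set c : K := dett (Q 1) (Q 3) / dett (Q 0) (Q 3) with hc
  have hc0 : c ≠ 0 := div_ne_zero (hq _ _ (by decide)) (hq _ _ (by decide))
  have hone : xx Q (Q 3) = 1 := by
    have := hq 1 3 (by decide)
    have := hq 0 3 (by decide)
    rw [xx]; field_simp
  set l : K := xx Q (Q 2) with hl
  have e1 : ∀ P, P ≠ Q 1 → xx Q P - 1 = c * (dett (Q 1) (Q 0) / dett (Q 1) (Q 3)) *
      (dett (Q 3) P / dett (Q 1) P) := by
    intro P hP
    rw [← hone]; exact xx_sub Q hQ hP (hQ.ne (by decide))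
  have el : ∀ P, P ≠ Q 1 → xx Q P - l = c * (dett (Q 1) (Q 0) / dett (Q 1) (Q 2)) *
      (dett (Q 2) P / dett (Q 1) P) := by
    intro P hP
    exact xx_sub Q hQ hP (hQ.ne (by decide))
  have k1 : c * (dett (Q 1) (Q 0) / dett (Q 1) (Q 3)) ≠ 0 :=
    mul_ne_zero hc0 (div_ne_zero (hq _ _ (by decide)) (hq _ _ (by decide)))
  have k2 : c * (dett (Q 1) (Q 0) / dett (Q 1) (Q 2)) ≠ 0 :=
    mul_ne_zero hc0 (div_ne_zero (hq _ _ (by decide)) (hq _ _ (by decide)))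
  have ey : ∀ P ∈ F, yy l (xx Q P) = (c * (dett (Q 1) (Q 0) / dett (Q 1) (Q 2))) /
      (c * (dett (Q 1) (Q 0) / dett (Q 1) (Q 3))) * (dett (Q 2) P / dett (Q 3) P) := by
    intro P hP
    rw [yy, e1 P (hne P hP 1), el P (hne P hP 1), mul_div_mul_comm]
    congr 1
    have := hLL P hP 1
    have := hLL P hP 3
    field_simp
  have hinj : Set.InjOn (xx Q) (F : Set (P1 K)) := by
    intro P hP R hR hPR
    by_contra hne'
    have hs := xx_sub Q hQ (hne P hP 1) (hne R hR 1)
    rw [hPR, sub_self] at hs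
    refine absurd hs.symm (mul_ne_zero (mul_ne_zero hc0 (div_ne_zero
      (hq _ _ (by decide)) (hLL R hR 1))) (div_ne_zero (dett_ne hne') (hLL P hP 1)))
  have hcfg : Cfg T l (F.image (xx Q)) := by
    constructor
    · exact mul_ne_zero (div_ne_zero (hq _ _ (by decide)) (hq _ _ (by decide))) hc0
    · intro h
      have := e1 (Q 2) (hQ.ne (by decide))
      rw [← hl, h, sub_self] at this
      exact mul_ne_zero k1 (div_ne_zero (hq _ _ (by decide)) (hq _ _ (by decide))) this.symm
    · simp only [Finset.forall_mem_image]
      intro P hP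
      exact mul_ne_zero (div_ne_zero (hLL P hP _) (hLL P hP _)) hc0
    · simp only [Finset.forall_mem_image]
      intro P hP
      rw [← sub_ne_zero, e1 P (hne P hP 1)]
      exact mul_ne_zero k1 (div_ne_zero (hLL P hP _) (hLL P hP _))
    · simp only [Finset.forall_mem_image]
      intro P hP
      rw [← sub_ne_zero, el P (hne P hP 1)]
      exact mul_ne_zero k2 (div_ne_zero (hLL P hP _) (hLL P hP _))
    · simp only [Finset.forall_mem_image]
      intro P hP R hR v hv
      rw [xx, xx, map_mul, map_mul]
      congr 1
      apply place_eq
      refine val_div (hLL P hP 0) (hLL P hP 1) (hLL R hR 0) (hLL R hR 1) ?_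
      rw [ord_of_logDist (hne P hP 0) (hne P hP 1) (hF P hP _ hv).1,
        ord_of_logDist (hne R hR 0) (hne R hR 1) (hF R hR _ hv).1]
    · simp only [Finset.forall_mem_image]
      intro P hP R hR v hv
      rw [ey P hP, ey R hR, map_mul, map_mul]
      congr 1
      apply place_eq
      refine val_div (hLL P hP 2) (hLL P hP 3) (hLL R hR 2) (hLL R hR 3) ?_
      rw [ord_of_logDist (hne P hP 2) (hne P hP 3) (hF P hP _ hv).2,
        ord_of_logDist (hne R hR 2) (hne R hR 3) (hF R hR _ hv).2]
  have := hcfg.main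
  rwa [Finset.card_image_of_injOn hinj] at this

end reduction
end Polynomial.FPL

/-- **Four-Point Lemma B.** Given four distinct points `Q₁, Q₂, Q₃, Q₄ ∈ ℙ¹(K)`, the set
`ℱ = {P ∈ ℙ¹(K) : δ_𝔭(P,Q₁) = δ_𝔭(P,Q₂), δ_𝔭(P,Q₃) = δ_𝔭(P,Q₄) ∀𝔭 ∉ S}` is finite with
cardinality at most `C(3,|S|) + 2`. -/
theorem four_point_lemma_B
    {K : Type*} [Field K] [NumberField K]
    (T : Finset (HeightOneSpectrum (𝓞 K)))
    (Q : Fin 4 → P1 K) (hQ : Function.Injective Q) :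
    {P : P1 K | ∀ v ∉ T,
        logDist v P (Q 0) = logDist v P (Q 1) ∧
        logDist v P (Q 2) = logDist v P (Q 3)}.Finite ∧
      ({P : P1 K | ∀ v ∉ T,
        logDist v P (Q 0) = logDist v P (Q 1) ∧
        logDist v P (Q 2) = logDist v P (Q 3)}.ncard : ℝ) ≤ Cconst 3 (sCard K T) + 2 := by
  have hfin : {P : P1 K | ∀ v ∉ T,
        logDist v P (Q 0) = logDist v P (Q 1) ∧
        logDist v P (Q 2) = logDist v P (Q 3)}.Finite := by
    by_contra hinf
    obtain ⟨n, hn⟩ := exists_nat_gt (Cconst 3 (sCard K T))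
    obtain ⟨F, hF, hcard⟩ := Set.Infinite.exists_subset_card_eq hinf n
    have := Polynomial.FPL.cfg_of T Q hQ F (fun P hP => hF hP)
    rw [hcard] at this
    linarith
  refine ⟨hfin, ?_⟩
  rw [Set.ncard_eq_toFinset_card _ hfin]
  have := Polynomial.FPL.cfg_of T Q hQ hfin.toFinset
    (fun P hP => (Set.Finite.mem_toFinset hfin).mp hP)
  linarith
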